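/- arXiv:0809.4862 — 3 statements merged into one kernel-verified Lean document; each statement's English description precedes it below -/
import Mathlib

section
/- Let d ≥ 1 and let k ≥ 2 be an integer. If a subset N of ℝ^d is a C^1 submanifold of ℝ^d and N is C^k homogeneous, then N is a C^k submanifold of ℝ^d. -/
open Metric Set

noncomputable section

/-- `ℝ^d` as a Euclidean space. -/
abbrev Euc (d : ℕ) := EuclideanSpace ℝ (Fin d)

/-- `H` is a `C^k` diffeomorphism from the open set `U` onto the open set `V`,
with inverse `H'`. -/
def IsCkDiffeoOn {E F : Type*} [NormedAddCommGroup E] [NormedSpace ℝ E]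
    [NormedAddCommGroup F] [NormedSpace ℝ F]
    (k : ℕ) (H : E → F) (H' : F → E) (U : Set E) (V : Set F) : Prop :=
  IsOpen U ∧ IsOpen V ∧ ContDiffOn ℝ k H U ∧ ContDiffOn ℝ k H' V ∧
    Set.MapsTo H U V ∧ Set.MapsTo H' V U ∧
    (∀ x ∈ U, H' (H x) = x) ∧ (∀ y ∈ V, H (H' y) = y)

/-- `N` is `C^k` homogeneous in `E`: any point of `N` can be taken to any other point of `N`
by a `C^k` diffeomorphism between open neighborhoods preserving `N`. -/
def CkHomogeneous {E : Type*} [NormedAddCommGroup E] [NormedSpace ℝ E]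
    (k : ℕ) (N : Set E) : Prop :=
  ∀ x ∈ N, ∀ y ∈ N, ∃ (U V : Set E) (H H' : E → E),
    IsCkDiffeoOn k H H' U V ∧ x ∈ U ∧ y ∈ V ∧ H x = y ∧ H '' (N ∩ U) = N ∩ V

/-- `N ⊆ ℝ^d` is a `C^k` submanifold of `ℝ^d`: near each of its points, `N` can be
straightened to a coordinate plane `ℝ^j × {0}` by a `C^k` diffeomorphism. -/
def IsCkSubmanifold (k d : ℕ) (N : Set (Euc d)) : Prop :=
  ∀ p ∈ N, ∃ (U V : Set (Euc d)) (φ φ' : Euc d → Euc d) (j : ℕ),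
    IsCkDiffeoOn k φ φ' U V ∧ p ∈ U ∧
    φ '' (N ∩ U) = V ∩ {x : Euc d | ∀ i : Fin d, j ≤ (i : ℕ) → x i = 0}


open Filter Topology

set_option linter.unusedSectionVars false

section Core

variable {X Y : Type} [NormedAddCommGroup X] [InnerProductSpace ℝ X] [FiniteDimensional ℝ X]
  [NormedAddCommGroup Y] [NormedSpace ℝ Y] [FiniteDimensional ℝ Y]

/-- Baire category, localized to an open set. -/
theorem baire_open {Z ι : Type*} [TopologicalSpace Z] [BaireSpace Z] [Countable ι] {U : Set Z}
    (hU : IsOpen U) (hne : U.Nonempty) (F : ι → Set Z)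
    (hF : ∀ i, ∀ x ∈ U, x ∈ closure (F i ∩ U) → x ∈ F i)
    (hc : ∀ x ∈ U, ∃ i, x ∈ F i) : ∃ i, ∃ x ∈ U, F i ∈ 𝓝 x := by
  have key := dense_iUnion_interior_of_closed (X := Z)
    (f := fun o : Option ι => o.elim Uᶜ (fun i => closure (F i ∩ U))) (by
      rintro (_ | i)
      · exact hU.isClosed_compl
      · exact isClosed_closure) (by
      rw [eq_univ_iff_forall]
      intro x
      by_cases hx : x ∈ U
      · obtain ⟨i, hi⟩ := hc x hx
        exact mem_iUnion.2 ⟨some i, subset_closure ⟨hi, hx⟩⟩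
      · exact mem_iUnion.2 ⟨none, hx⟩)
  obtain ⟨x, hxU, hx⟩ := key.inter_open_nonempty U hU hne
  obtain ⟨o, ho⟩ := mem_iUnion.1 hx
  rcases o with _ | i
  · exact absurd hxU (interior_subset ho)
  · refine ⟨i, x, hxU, ?_⟩
    filter_upwards [mem_interior_iff_mem_nhds.1 ho, hU.mem_nhds hxU] with y hy hyU
    exact hF i y hyU hy

/-- First-order Taylor remainder. -/
def rho (f : X → Y) (x z : X) : Y := f z - f x - fderiv ℝ f x (z - x)

/-- The second-order touching cone. -/
def PC (f : X → Y) (x : X) : Set (Y →L[ℝ] ℝ) :=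
  {η | ∃ C : ℝ, ∀ᶠ z in 𝓝 x, η (rho f x z) ≤ C * ‖z - x‖ ^ 2}

/-- Quantitative version of the touching cone. -/
def PCn (f : X → Y) (W : Set X) (n : ℕ) (x : X) : Set (Y →L[ℝ] ℝ) :=
  {η | ∀ z ∈ W, ‖z - x‖ < 1 / ((n : ℝ) + 1) → η (rho f x z) ≤ n * ‖z - x‖ ^ 2}

theorem PCn_sub {f : X → Y} {W : Set X} (hW : IsOpen W) {x : X} (hx : x ∈ W) (n : ℕ) :
    PCn f W n x ⊆ PC f x := by
  intro η h
  refine ⟨n, ?_⟩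
  filter_upwards [hW.mem_nhds hx, Metric.ball_mem_nhds x (Nat.one_div_pos_of_nat (n := n) (α := ℝ))]
    with z hz hz'
  exact h z hz (by simpa [dist_eq_norm] using hz')

theorem PCn_mono {f : X → Y} {W : Set X} {x : X} {n m : ℕ} (hnm : n ≤ m) :
    PCn f W n x ⊆ PCn f W m x := by
  intro η h z hz hzx
  have hnm' : (n : ℝ) ≤ m := by exact_mod_cast hnm
  refine (h z hz (hzx.trans_le ?_)).trans ?_
  · gcongr
  · gcongr

theorem PC_exists {f : X → Y} {W : Set X} {x : X} {η : Y →L[ℝ] ℝ} (h : η ∈ PC f x) :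
    ∃ n, η ∈ PCn f W n x := by
  obtain ⟨C, hC⟩ := h
  obtain ⟨ε, hε, hb⟩ := Metric.eventually_nhds_iff.1 hC
  obtain ⟨n1, hn1⟩ := exists_nat_one_div_lt hε
  obtain ⟨n2, hn2⟩ := exists_nat_ge C
  refine ⟨max n1 n2, fun z _ hzx => ?_⟩
  refine (hb (y := z) ?_).trans ?_
  · rw [dist_eq_norm]
    refine hzx.trans (lt_of_le_of_lt ?_ hn1)
    gcongr
    exact le_max_left _ _
  · gcongr
    refine hn2.trans ?_
    exact_mod_cast le_max_right _ _

theorem PC_add {f : X → Y} {x : X} {η ζ : Y →L[ℝ] ℝ} (h : η ∈ PC f x) (h' : ζ ∈ PC f x) :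
    η + ζ ∈ PC f x := by
  obtain ⟨C, hC⟩ := h
  obtain ⟨C', hC'⟩ := h'
  refine ⟨C + C', ?_⟩
  filter_upwards [hC, hC'] with z h1 h2
  simp only [add_apply]
  linarith

theorem PC_smul {f : X → Y} {x : X} {η : Y →L[ℝ] ℝ} (h : η ∈ PC f x) {c : ℝ} (hc : 0 ≤ c) :
    c • η ∈ PC f x := by
  obtain ⟨C, hC⟩ := h
  refine ⟨c * C, ?_⟩
  filter_upwards [hC] with z h1
  have := mul_le_mul_of_nonneg_left h1 hc
  simp only [smul_apply, smul_eq_mul]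
  linarith

/-- The touching relation is closed. -/
theorem rho_tendsto {f : X → Y} {W : Set X} (hW : IsOpen W) (hf : ContDiffOn ℝ 1 f W) {x : X}
    (hx : x ∈ W) (z : X) : ContinuousAt (fun y => rho f y z) x := by
  have h1 : ContinuousAt f x := (hf.continuousOn).continuousAt (hW.mem_nhds hx)
  have h2 : ContinuousAt (fderiv ℝ f) x :=
    (hf.continuousOn_fderiv_of_isOpen hW le_rfl).continuousAt (hW.mem_nhds hx)
  unfold rho
  fun_prop

theorem PCn_closed {f : X → Y} {W : Set X} (hW : IsOpen W) (hf : ContDiffOn ℝ 1 f W) {x : X}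
    (hx : x ∈ W) {n : ℕ} {α : Type*} {l : Filter α} [l.NeBot] {u : α → X} {v : α → Y →L[ℝ] ℝ}
    {η : Y →L[ℝ] ℝ} (hu : Tendsto u l (𝓝 x)) (hv : Tendsto v l (𝓝 η))
    (h : ∀ a, v a ∈ PCn f W n (u a)) : η ∈ PCn f W n x := by
  intro z hz hzx
  have h1 : Tendsto (fun a => rho f (u a) z) l (𝓝 (rho f x z)) :=
    (rho_tendsto hW hf hx z).tendsto.comp hu
  have h2 : Tendsto (fun a => v a (rho f (u a) z)) l (𝓝 (η (rho f x z))) :=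
    (isBoundedBilinearMap_apply.continuous.tendsto (η, rho f x z)).comp (hv.prodMk_nhds h1)
  have h3 : Tendsto (fun a => ‖z - u a‖) l (𝓝 ‖z - x‖) :=
    (tendsto_const_nhds.sub hu).norm
  refine le_of_tendsto_of_tendsto h2 ((h3.pow 2).const_mul (n : ℝ)) ?_
  filter_upwards [h3.eventually_lt_const hzx] with a ha
  exact h a z hz ha

/-- Touching points are dense for every covector. -/
theorem touch {f : X → Y} {W V : Set X} (hf : ContDiffOn ℝ 1 f W) (hW : IsOpen W)
    (hV : IsOpen V) (hVW : V ⊆ W) (hne : V.Nonempty) (η : Y →L[ℝ] ℝ) :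
    ∃ x ∈ V, η ∈ PC f x := by
  obtain ⟨a, ha⟩ := hne
  obtain ⟨r, hr, hball⟩ := Metric.nhds_basis_closedBall.mem_iff.1 (hV.mem_nhds ha)
  have hcf : ContinuousOn (fun z => η (f z)) (closedBall a r) :=
    η.continuous.comp_continuousOn (hf.continuousOn.mono (hball.trans hVW))
  obtain ⟨b, -, hb⟩ := (isCompact_closedBall a r).exists_isMaxOn
    ⟨a, mem_closedBall_self hr.le⟩ hcf
  set M := η (f b) - η (f a) + 1 with hM
  have hMa : ∀ z ∈ closedBall a r, η (f z) - η (f a) < M := fun z hz => by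
    have := hb hz
    simp only [mem_ofPred_eq] at this
    linarith
  have hMpos : 0 < M := by
    have := hMa a (mem_closedBall_self hr.le)
    linarith
  set K := M / r ^ 2 with hK
  have hKpos : 0 < K := by positivity
  obtain ⟨x, hx, hmax⟩ := (isCompact_closedBall a r).exists_isMaxOn
    ⟨a, mem_closedBall_self hr.le⟩
    (hcf.sub (f := fun z => η (f z)) (g := fun z => K * ‖z - a‖ ^ 2) (by fun_prop))
  have hxa : η (f a) ≤ η (f x) - K * ‖x - a‖ ^ 2 := by
    have := hmax (mem_closedBall_self hr.le)
    simpa using this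
  have hxr : ‖x - a‖ < r := by
    have h1 := hMa x hx
    have h2 : K * ‖x - a‖ ^ 2 < K * r ^ 2 := by
      have : K * r ^ 2 = M := by rw [hK]; field_simp
      linarith
    have h3 := lt_of_mul_lt_mul_left h2 hKpos.le
    exact lt_of_pow_lt_pow_left₀ 2 hr.le h3
  have hxb : x ∈ ball a r := by simpa [dist_eq_norm] using hxr
  have hxV : x ∈ V := hball hx
  have hnb : closedBall a r ∈ 𝓝 x := mem_of_superset (isOpen_ball.mem_nhds hxb) ball_subset_closedBall
  refine ⟨x, hxV, K, ?_⟩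
  have hfx : HasFDerivAt f (fderiv ℝ f x) x :=
    ((hf.differentiableOn one_ne_zero).differentiableAt (hW.mem_nhds (hVW hxV))).hasFDerivAt
  have hloc : IsLocalMax (fun z => η (f z) - K * ‖z - a‖ ^ 2) x := hmax.isLocalMax hnb
  have hd : HasFDerivAt (fun z => η (f z) - K * ‖z - a‖ ^ 2)
      (η.comp (fderiv ℝ f x) - K • (2 • (innerSL ℝ (x - a)))) x := by
    refine (η.hasFDerivAt.comp x hfx).sub (HasFDerivAt.const_mul ?_ K)
    have := ((hasFDerivAt_id x).sub_const a).norm_sq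
    simpa using this
  have h0 := hloc.hasFDerivAt_eq_zero hd
  filter_upwards [hnb] with z hz
  have h1 := hmax hz
  simp only [mem_ofPred_eq, Pi.sub_apply] at h1
  have h2 := congrArg (fun T : X →L[ℝ] ℝ => T (z - x)) h0
  simp at h2
  have h3 : ‖z - a‖ ^ 2 = ‖x - a‖ ^ 2 + 2 * inner ℝ (x - a) (z - x) + ‖z - x‖ ^ 2 := by
    rw [← norm_add_sq_real]; congr 2; abel
  rw [h3] at h1
  have h4 : η (rho f x z) = η (f z) - η (f x) - η (fderiv ℝ f x (z - x)) := by simp [rho]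
  have h5 : η (fderiv ℝ f x (z - x)) = K * (2 * inner ℝ (x - a) (z - x)) := by
    rw [map_sub (fderiv ℝ f x), map_sub, inner_sub_left]
    linarith
  rw [h4, h5]
  nlinarith

/-- A local diffeomorphism (one half of the data) preserving the graph of `f`. -/
structure Half (k : ℕ) (f : X → Y) (H H' : X × Y → X × Y) (x x' : X) : Prop where
  smooth : ContDiffAt ℝ k H (x, f x)
  base : H (x, f x) = (x', f x')
  inv : ∀ᶠ w in 𝓝 (x, f x), H' (H w) = w
  graph : ∀ᶠ z in 𝓝 x, (H (z, f z)).2 = f (H (z, f z)).1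

/-- The graph germs at `x` and `x'` are `C^k` equivalent. -/
def GRel (k : ℕ) (f : X → Y) (x x' : X) : Prop :=
  ∃ H H', Half k f H H' x x' ∧ Half k f H' H x' x

/-- Differential restricted to a graph plane. -/
def jm (D : X × Y →L[ℝ] X × Y) (u : X →L[ℝ] Y) : X →L[ℝ] X × Y :=
  D.comp ((ContinuousLinearMap.id ℝ X).prod u)

theorem jm_apply (D : X × Y →L[ℝ] X × Y) (u : X →L[ℝ] Y) (v : X) : jm D u v = D (v, u v) := rfl

/-- Prolongation of a map to first jets. -/
def prol (H : X × Y → X × Y) (w : X × (Y × (X →L[ℝ] Y))) : X × (Y × (X →L[ℝ] Y)) :=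
  ((H (w.1, w.2.1)).1, ((H (w.1, w.2.1)).2,
    ((ContinuousLinearMap.snd ℝ X Y).comp (jm (fderiv ℝ H (w.1, w.2.1)) w.2.2)).comp
      ((ContinuousLinearMap.fst ℝ X Y).comp (jm (fderiv ℝ H (w.1, w.2.1)) w.2.2)).inverse))

theorem fder_left_inv {H H' : X × Y → X × Y} {p : X × Y} (hH : DifferentiableAt ℝ H p)
    (hH' : DifferentiableAt ℝ H' (H p)) (h : ∀ᶠ w in 𝓝 p, H' (H w) = w) (v : X × Y) :
    fderiv ℝ H' (H p) (fderiv ℝ H p v) = v := by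
  have h1 : HasFDerivAt (fun w => H' (H w)) ((fderiv ℝ H' (H p)).comp (fderiv ℝ H p)) p :=
    hH'.hasFDerivAt.comp p hH.hasFDerivAt
  have h2 : HasFDerivAt (fun w => H' (H w)) (ContinuousLinearMap.id ℝ (X × Y)) p :=
    (hasFDerivAt_id p).congr_of_eventuallyEq h
  exact congrArg (fun T : X × Y →L[ℝ] X × Y => T v) (h1.unique h2)

theorem graph_hasFDerivAt {H : X × Y → X × Y} {f : X → Y} {z : X}
    (hH : DifferentiableAt ℝ H (z, f z)) (hf : DifferentiableAt ℝ f z) :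
    HasFDerivAt (fun y => H (y, f y)) (jm (fderiv ℝ H (z, f z)) (fderiv ℝ f z)) z :=
  HasFDerivAt.comp (f := fun y => (y, f y)) z hH.hasFDerivAt
    ((hasFDerivAt_id z).prodMk hf.hasFDerivAt)

theorem graph_tangent {H : X × Y → X × Y} {f : X → Y} {z : X}
    (hH : DifferentiableAt ℝ H (z, f z)) (hf : DifferentiableAt ℝ f z)
    (hf' : DifferentiableAt ℝ f (H (z, f z)).1)
    (hg : ∀ᶠ y in 𝓝 z, (H (y, f y)).2 = f (H (y, f y)).1) (v : X) :
    (jm (fderiv ℝ H (z, f z)) (fderiv ℝ f z) v).2 =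
      fderiv ℝ f (H (z, f z)).1 (jm (fderiv ℝ H (z, f z)) (fderiv ℝ f z) v).1 := by
  have h0 := graph_hasFDerivAt hH hf
  have h1 := h0.snd
  have h2 := HasFDerivAt.comp (f := fun y => (H (y, f y)).1) z hf'.hasFDerivAt h0.fst
  have h3 := h2.congr_of_eventuallyEq (f₁ := fun y => (H (y, f y)).2) hg
  exact congrArg (fun T : X →L[ℝ] Y => T v) (h1.unique h3)

theorem isInvertible_of_left {A B : X →L[ℝ] X} (h : ∀ v, B (A v) = v) : A.IsInvertible := by
  have hinj : Function.Injective (A : X →ₗ[ℝ] X) := fun a b hab => by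
    have := congrArg B hab
    simpa [h] using this
  exact ⟨(LinearEquiv.ofInjectiveEndo (A : X →ₗ[ℝ] X) hinj).toContinuousLinearEquiv, by ext; rfl⟩

theorem base_invertible {f : X → Y} {W : Set X} (hW : IsOpen W) (hf : ContDiffOn ℝ 1 f W)
    {k : ℕ} (hk : k ≠ 0) {H H' : X × Y → X × Y} {x x' : X} (hx : x ∈ W) (hx' : x' ∈ W)
    (h : Half k f H H' x x') (h' : Half k f H' H x' x) :
    ((ContinuousLinearMap.fst ℝ X Y).comp
      (jm (fderiv ℝ H (x, f x)) (fderiv ℝ f x))).IsInvertible := by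
  have hk' : (k : WithTop ℕ∞) ≠ 0 := by exact_mod_cast hk
  have hd : ∀ y ∈ W, DifferentiableAt ℝ f y := fun y hy =>
    (hf.differentiableOn one_ne_zero).differentiableAt (hW.mem_nhds hy)
  have hH := h.smooth.differentiableAt hk'
  have hH' := h'.smooth.differentiableAt hk'
  apply isInvertible_of_left (B := (ContinuousLinearMap.fst ℝ X Y).comp
      (jm (fderiv ℝ H' (x', f x')) (fderiv ℝ f x')))
  intro v
  have ht := graph_tangent hH (hd x hx) (by rw [h.base]; exact hd x' hx') h.graph v
  rw [h.base] at ht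
  have hi := fder_left_inv hH (by rw [h.base]; exact hH') h.inv (v, fderiv ℝ f x v)
  rw [h.base] at hi
  change (jm (fderiv ℝ H' (x', f x')) (fderiv ℝ f x')
    (jm (fderiv ℝ H (x, f x)) (fderiv ℝ f x) v).1).1 = v
  simp only at ht
  rw [jm_apply, ← ht, Prod.mk.eta, jm_apply, hi]

theorem half_prol {f : X → Y} {W : Set X} (hW : IsOpen W) (hf : ContDiffOn ℝ 1 f W)
    {k : ℕ} {H H' : X × Y → X × Y} {x x' : X} (hx : x ∈ W) (hx' : x' ∈ W)
    (h : Half (k + 1) f H H' x x') (h' : Half (k + 1) f H' H x' x) :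
    Half k (fun z => (f z, fderiv ℝ f z)) (prol H) (prol H') x x' := by
  have hd : ∀ y ∈ W, DifferentiableAt ℝ f y := fun y hy =>
    (hf.differentiableOn one_ne_zero).differentiableAt (hW.mem_nhds hy)
  have hk' : ((k + 1 : ℕ) : WithTop ℕ∞) ≠ 0 := by exact_mod_cast (Nat.succ_ne_zero k)
  have hH := h.smooth.differentiableAt hk'
  have hH' := h'.smooth.differentiableAt hk'
  have hinv := base_invertible hW hf (Nat.succ_ne_zero k) hx hx' h h'
  have hfx : ContinuousAt f x := (hd x hx).continuousAt
  have hfdx : ContinuousAt (fderiv ℝ f) x :=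
    (hf.continuousOn_fderiv_of_isOpen hW le_rfl).continuousAt (hW.mem_nhds hx)
  -- smoothness of the constituents
  have hfd : ContDiffAt ℝ k (fderiv ℝ H) (x, f x) :=
    h.smooth.fderiv_right (m := k) (by exact_mod_cast le_rfl)
  have hproj : ContDiffAt ℝ k (fun w : X × (Y × (X →L[ℝ] Y)) => (w.1, w.2.1))
      (x, (f x, fderiv ℝ f x)) := by fun_prop
  have hJ : ContDiffAt ℝ k
      (fun w : X × (Y × (X →L[ℝ] Y)) => jm (fderiv ℝ H (w.1, w.2.1)) w.2.2)
      (x, (f x, fderiv ℝ f x)) := by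
    unfold jm
    refine ContDiffAt.clm_comp (hfd.comp (x, (f x, fderiv ℝ f x)) hproj) ?_
    have : (fun w : X × (Y × (X →L[ℝ] Y)) => (ContinuousLinearMap.id ℝ X).prod w.2.2) =
      fun w => (ContinuousLinearMap.inl ℝ X Y) + (ContinuousLinearMap.inr ℝ X Y).comp w.2.2 := by
      ext w v <;> simp
    rw [this]
    exact contDiffAt_const.add (contDiffAt_const.clm_comp (by fun_prop))
  have hJ1 : ContDiffAt ℝ k
      (fun w : X × (Y × (X →L[ℝ] Y)) => (ContinuousLinearMap.fst ℝ X Y).comp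
        (jm (fderiv ℝ H (w.1, w.2.1)) w.2.2))
      (x, (f x, fderiv ℝ f x)) := contDiffAt_const.clm_comp hJ
  have hJ2 : ContDiffAt ℝ k
      (fun w : X × (Y × (X →L[ℝ] Y)) => (ContinuousLinearMap.snd ℝ X Y).comp
        (jm (fderiv ℝ H (w.1, w.2.1)) w.2.2))
      (x, (f x, fderiv ℝ f x)) := contDiffAt_const.clm_comp hJ
  have hHp : ContDiffAt ℝ k (fun w : X × (Y × (X →L[ℝ] Y)) => H (w.1, w.2.1))
      (x, (f x, fderiv ℝ f x)) :=
    (h.smooth.of_le (by exact_mod_cast Nat.le_succ k)).comp (x, (f x, fderiv ℝ f x)) hproj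
  have hcompute : ∀ z, DifferentiableAt ℝ H (z, f z) → DifferentiableAt ℝ f z →
      DifferentiableAt ℝ f (H (z, f z)).1 →
      (∀ᶠ y in 𝓝 z, (H (y, f y)).2 = f (H (y, f y)).1) →
      ((ContinuousLinearMap.fst ℝ X Y).comp
        (jm (fderiv ℝ H (z, f z)) (fderiv ℝ f z))).IsInvertible →
      (prol H (z, (f z, fderiv ℝ f z))).2 =
        (f (H (z, f z)).1, fderiv ℝ f (H (z, f z)).1) := by
    intro z h1 h2 h3 h4 h5
    refine Prod.ext h4.self_of_nhds ?_
    have ht := graph_tangent h1 h2 h3 h4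
    simp only [prol]
    have : (ContinuousLinearMap.snd ℝ X Y).comp (jm (fderiv ℝ H (z, f z)) (fderiv ℝ f z)) =
        (fderiv ℝ f (H (z, f z)).1).comp ((ContinuousLinearMap.fst ℝ X Y).comp
          (jm (fderiv ℝ H (z, f z)) (fderiv ℝ f z))) := by
      ext v
      exact ht v
    rw [this, ContinuousLinearMap.comp_assoc, h5.self_comp_inverse,
      ContinuousLinearMap.comp_id]
  have hopen : ∀ᶠ w in 𝓝 ((x, (f x, fderiv ℝ f x)) : X × (Y × (X →L[ℝ] Y))),
      ((ContinuousLinearMap.fst ℝ X Y).comp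
        (jm (fderiv ℝ H (w.1, w.2.1)) w.2.2)).IsInvertible := by
    obtain ⟨e, he⟩ := hinv
    have := hJ1.continuousAt.eventually (p := fun T => T.IsInvertible) (by
      beta_reduce
      rw [← he]
      filter_upwards [ContinuousLinearEquiv.nhds e] with T hT
      exact hT)
    exact this
  have hdiffH : ∀ᶠ p in 𝓝 (x, f x), DifferentiableAt ℝ H p := by
    have := (h.smooth.of_le (m := 1) (by exact_mod_cast Nat.succ_le_succ (Nat.zero_le k))).eventually
      (by simp)
    filter_upwards [this] with p hp
    exact hp.differentiableAt one_ne_zero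
  have hdiffH' : ∀ᶠ p in 𝓝 (x', f x'), DifferentiableAt ℝ H' p := by
    have := (h'.smooth.of_le (m := 1) (by exact_mod_cast Nat.succ_le_succ (Nat.zero_le k))).eventually
      (by simp)
    filter_upwards [this] with p hp
    exact hp.differentiableAt one_ne_zero
  have hgc : ContinuousAt (fun z => (z, f z)) x := continuousAt_id.prodMk hfx
  have hgc' : ContinuousAt (fun z => (z, (f z, fderiv ℝ f z))) x :=
    continuousAt_id.prodMk (hfx.prodMk hfdx)
  have hhW : ∀ᶠ z in 𝓝 x, (H (z, f z)).1 ∈ W := by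
    have : ContinuousAt (fun z => (H (z, f z)).1) x :=
      continuousAt_fst.comp (ContinuousAt.comp (f := fun z => (z, f z)) hH.continuousAt hgc)
    refine this.eventually (hW.mem_nhds ?_)
    beta_reduce
    rw [h.base]
    exact hx'
  constructor
  · unfold prol
    refine hHp.fst.prodMk (hHp.snd.prodMk (hJ2.clm_comp ?_))
    exact (ContinuousLinearMap.IsInvertible.contDiffAt_map_inverse hinv).comp
      (x, (f x, fderiv ℝ f x)) hJ1
  · have := hcompute x hH (hd x hx) (by rw [h.base]; exact hd x' hx') h.graph hinv
    refine Prod.ext ?_ ?_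
    · simp [prol, h.base]
    · rw [this, h.base]
  · have e1 := hproj.continuousAt.eventually h.inv.eventually_nhds
    have e2 := hproj.continuousAt.eventually hdiffH
    have e3 := hproj.continuousAt.eventually
      (hH.continuousAt.eventually (p := fun p => DifferentiableAt ℝ H' p)
        (by rw [h.base]; exact hdiffH'))
    filter_upwards [e1, e2, e3, hopen] with w w1 w2 w3 w4
    obtain ⟨a, b, u⟩ := w
    simp only at w1 w2 w3 w4
    have hi := fder_left_inv w2 w3 w1
    obtain ⟨e, he⟩ := w4
    have he' : ∀ v, (jm (fderiv ℝ H (a, b)) u v).1 = e v := fun v => by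
      have := congrArg (fun T : X →L[ℝ] X => T v) he
      exact this.symm
    set u1 := (prol H (a, (b, u))).2.2 with hu1
    have hu1' : ∀ v, u1 (e v) = (jm (fderiv ℝ H (a, b)) u v).2 := fun v => by
      simp only [hu1, prol, ← he, ContinuousLinearMap.inverse_equiv]
      simp
    have hJ' : ∀ v, jm (fderiv ℝ H' (H (a, b))) u1 v = (e.symm v, u (e.symm v)) := fun v => by
      have h1 : (v, u1 v) = jm (fderiv ℝ H (a, b)) u (e.symm v) := by
        refine Prod.ext ?_ ?_
        · rw [he']; simp
        · rw [← hu1']; simp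
      rw [jm_apply, h1, jm_apply, hi]
    have hp : prol H (a, (b, u)) = ((H (a, b)).1, ((H (a, b)).2, u1)) := rfl
    rw [hp]
    have hfe : (ContinuousLinearMap.fst ℝ X Y).comp (jm (fderiv ℝ H' (H (a, b))) u1) =
        (e.symm : X →L[ℝ] X) := by
      ext v
      simp [hJ']
    simp only [prol, Prod.mk.eta, hfe, ContinuousLinearMap.inverse_equiv, w1.self_of_nhds]
    refine Prod.ext rfl (Prod.ext rfl ?_)
    ext v
    simp [hJ']
  · have e1 := hgc.eventually hdiffH
    filter_upwards [e1, hW.mem_nhds hx, hhW, h.graph.eventually_nhds, hgc'.eventually hopen]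
      with z z1 z2 z3 z4 z5
    have := hcompute z z1 (hd z z2) (hd _ z3) z4 z5
    rw [this]
    rfl

theorem taylor_two {E F : Type*} [NormedAddCommGroup E] [NormedSpace ℝ E]
    [NormedAddCommGroup F] [NormedSpace ℝ F] {H : E → F} {p : E} (h : ContDiffAt ℝ 2 H p) :
    ∃ C : ℝ, 0 ≤ C ∧ ∀ᶠ q in 𝓝 p, ‖H q - H p - fderiv ℝ H p (q - p)‖ ≤ C * ‖q - p‖ ^ 2 := by
  have h1 : ContDiffAt ℝ 1 (fderiv ℝ H) p := h.fderiv_right (m := 1) (by norm_num)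
  obtain ⟨K, t, ht, hK⟩ := h1.exists_lipschitzOnWith
  have hd : ∀ᶠ q in 𝓝 p, DifferentiableAt ℝ H q := by
    filter_upwards [(h.of_le (m := 1) (by norm_num)).eventually (by simp)] with q hq
    exact hq.differentiableAt one_ne_zero
  obtain ⟨ε, hε, hb⟩ := Metric.eventually_nhds_iff.1 (hd.and ht)
  refine ⟨K, K.2, ?_⟩
  filter_upwards [Metric.ball_mem_nhds p hε] with q hq
  have hsub : ∀ y ∈ closedBall p ‖q - p‖, dist y p < ε := fun y hy => by
    rw [mem_closedBall] at hy
    rw [Metric.mem_ball, dist_eq_norm] at hq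
    exact hy.trans_lt hq
  have := Convex.norm_image_sub_le_of_norm_fderiv_le' (𝕜 := ℝ) (f := H) (φ := fderiv ℝ H p)
    (s := closedBall p ‖q - p‖) (C := K * ‖q - p‖) (x := p) (y := q)
    (fun y hy => (hb (hsub y hy)).1) (fun y hy => by
      refine (hK.norm_sub_le (hb (hsub y hy)).2 (mem_of_mem_nhds ht)).trans ?_
      rw [mem_closedBall, dist_eq_norm] at hy
      gcongr) (convex_closedBall _ _) (mem_closedBall_self (norm_nonneg _))
      (by simp [dist_eq_norm])
  refine this.trans (le_of_eq (by ring))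

theorem transfer_PC {f : X → Y} {W : Set X} (hW : IsOpen W) (hf : ContDiffOn ℝ 1 f W)
    {x x' : X} (hx : x ∈ W) (hx' : x' ∈ W) (h : GRel 2 f x x') :
    ∃ T : (Y →L[ℝ] ℝ) →ₗ[ℝ] (Y →L[ℝ] ℝ), Function.Injective T ∧
      ∀ η ∈ PC f x', T η ∈ PC f x := by
  obtain ⟨H, H', h, h'⟩ := h
  have hd : ∀ y ∈ W, DifferentiableAt ℝ f y := fun y hy =>
    (hf.differentiableOn one_ne_zero).differentiableAt (hW.mem_nhds hy)
  have hH : DifferentiableAt ℝ H (x, f x) := h.smooth.differentiableAt (by norm_num)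
  have hH' : DifferentiableAt ℝ H' (x', f x') := h'.smooth.differentiableAt (by norm_num)
  have ht := graph_tangent hH (hd x hx) (by rw [h.base]; exact hd x' hx') h.graph
  rw [h.base] at ht
  simp only at ht
  have hi := fder_left_inv hH' (by rw [h'.base]; exact hH) h'.inv
  rw [h'.base] at hi
  set D := fderiv ℝ H (x, f x) with hD
  set L : X × Y →L[ℝ] Y := ContinuousLinearMap.snd ℝ X Y -
    (fderiv ℝ f x').comp (ContinuousLinearMap.fst ℝ X Y) with hL
  have hLapp : ∀ w : X × Y, L w = w.2 - fderiv ℝ f x' w.1 := fun w => rfl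
  have hLt : ∀ v, L (D (v, fderiv ℝ f x v)) = 0 := fun v => by
    have := ht v
    rw [jm_apply] at this
    rw [hLapp, this, sub_self]
  set B : Y →L[ℝ] Y := (L.comp D).comp (ContinuousLinearMap.inr ℝ X Y) with hB
  have hBapp : ∀ y, B y = L (D (0, y)) := fun y => rfl
  have hBs : Function.Surjective B := fun y => by
    set w := fderiv ℝ H' (x', f x') (0, y) with hw
    refine ⟨w.2 - fderiv ℝ f x w.1, ?_⟩
    have h1 : ((0 : X), w.2 - fderiv ℝ f x w.1) = w - (w.1, fderiv ℝ f x w.1) := by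
      refine Prod.ext ?_ ?_ <;> simp
    rw [hBapp, h1, map_sub, map_sub, hLt, hw, hi, hLapp]
    simp
  refine ⟨{ toFun := fun η => η.comp B, map_add' := fun _ _ => rfl, map_smul' := fun _ _ => rfl },
    ?_, ?_⟩
  · intro η ζ hηζ
    ext y
    obtain ⟨y, rfl⟩ := hBs y
    exact congrArg (fun T : Y →L[ℝ] ℝ => T y) hηζ
  · rintro η ⟨C, hC⟩
    change η.comp B ∈ PC f x
    obtain ⟨K, hK0, hK⟩ := taylor_two h.smooth
    have hgr : HasFDerivAt (fun z => (z, f z))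
      ((ContinuousLinearMap.id ℝ X).prod (fderiv ℝ f x)) x :=
      (hasFDerivAt_id x).prodMk (hd x hx).hasFDerivAt
    have hhd := (graph_hasFDerivAt hH (hd x hx)).fst
    obtain ⟨c1, hc1⟩ := hgr.isBigO_sub.bound
    obtain ⟨c2, hc2⟩ := hhd.isBigO_sub.bound
    have hht : Tendsto (fun z => (H (z, f z)).1) (𝓝 x) (𝓝 x') := by
      have := hhd.continuousAt.tendsto
      simpa [h.base] using this
    refine ⟨|C| * c2 ^ 2 + ‖η.comp L‖ * (K * c1 ^ 2), ?_⟩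
    filter_upwards [hc1, hc2, hht.eventually hC, hgr.continuousAt.eventually hK, h.graph]
      with z z1 z2 z3 z4 z5
    rw [h.base] at z2 z4
    have e1 : rho f x' (H (z, f z)).1 = L (H (z, f z) - (x', f x')) := by
      rw [hLapp, rho, ← z5]; simp
    have e2 : ((z, f z) : X × Y) - (x, f x) = (z - x, fderiv ℝ f x (z - x)) + (0, rho f x z) := by
      refine Prod.ext ?_ ?_ <;> simp [rho]
    have e3 : L (D ((z, f z) - (x, f x))) = B (rho f x z) := by
      rw [e2, map_add, map_add, hLt, zero_add, hBapp]
    have e4 : (η.comp B) (rho f x z) = η (rho f x' (H (z, f z)).1) -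
        (η.comp L) (H (z, f z) - (x', f x') - D ((z, f z) - (x, f x))) := by
      rw [map_sub (η.comp L)]
      simp only [ContinuousLinearMap.comp_apply]
      rw [← e1, e3]; ring
    have b1 : ‖(z, f z) - (x, f x)‖ ^ 2 ≤ c1 ^ 2 * ‖z - x‖ ^ 2 := by
      rw [← mul_pow]; gcongr
    have b2 : ‖(H (z, f z)).1 - x'‖ ^ 2 ≤ c2 ^ 2 * ‖z - x‖ ^ 2 := by
      rw [← mul_pow]; gcongr
    have b3 : η (rho f x' (H (z, f z)).1) ≤ |C| * (c2 ^ 2 * ‖z - x‖ ^ 2) :=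
      z3.trans ((mul_le_mul_of_nonneg_right (le_abs_self C) (by positivity)).trans (by gcongr))
    have b4 : -((η.comp L) (H (z, f z) - (x', f x') - D ((z, f z) - (x, f x)))) ≤
        ‖η.comp L‖ * (K * (c1 ^ 2 * ‖z - x‖ ^ 2)) := by
      refine (neg_le_abs _).trans (((η.comp L).le_opNorm _).trans ?_)
      gcongr
      exact z4.trans (by gcongr)
    rw [e4]
    nlinarith

theorem span_finrank_le {f : X → Y} {W : Set X} (hW : IsOpen W) (hf : ContDiffOn ℝ 1 f W)
    {x x' : X} (hx : x ∈ W) (hx' : x' ∈ W) (h : GRel 2 f x x') :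
    Module.finrank ℝ (Submodule.span ℝ (PC f x')) ≤
      Module.finrank ℝ (Submodule.span ℝ (PC f x)) := by
  obtain ⟨T, hT, hTP⟩ := transfer_PC hW hf hx hx' h
  rw [(Submodule.equivMapOfInjective T hT _).finrank_eq]
  apply Submodule.finrank_mono
  rw [Submodule.map_span, Submodule.span_le]
  rintro _ ⟨η, hη, rfl⟩
  exact Submodule.subset_span (hTP η hη)

/-- Uniform linearly independent frames in the touching cone. -/
def Frame (f : X → Y) (W : Set X) (r n : ℕ) (x : X)
    (vA : (Fin r → (Y →L[ℝ] ℝ)) × ((Y →L[ℝ] ℝ) →L[ℝ] (Fin r → ℝ))) : Prop :=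
  ‖vA‖ ≤ n ∧ (∀ j, vA.1 j ∈ PCn f W n x) ∧ ∀ j, vA.2 (vA.1 j) = Pi.single j 1

theorem frame_exists {f : X → Y} {W : Set X} {x : X} {r : ℕ}
    (hr : Module.finrank ℝ (Submodule.span ℝ (PC f x)) = r) :
    ∃ n vA, Frame f W r n x vA := by
  subst hr
  obtain ⟨v, hv, -, hli⟩ := Submodule.exists_fun_fin_finrank_span_eq ℝ (PC f x)
  obtain ⟨A, hA⟩ := LinearMap.exists_leftInverse_of_injective
    (Fintype.linearCombination ℝ v) (LinearMap.ker_eq_bot.2 (by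
      exact linearIndependent_iff_injective_fintypeLinearCombination.1 hli))
  have hAv : ∀ j, A (v j) = Pi.single j 1 := fun j => by
    have := congrArg (fun T => T (Pi.single j (1 : ℝ))) hA
    simpa [Fintype.linearCombination_apply_single] using this
  choose m hm using fun j => PC_exists (W := W) (hv j)
  set vA := (v, LinearMap.toContinuousLinearMap A) with hvA
  obtain ⟨n0, hn0⟩ := exists_nat_ge ‖vA‖
  refine ⟨max n0 (Finset.univ.sup m), vA, hn0.trans (by exact_mod_cast le_max_left _ _),
    fun j => PCn_mono ((Finset.le_sup (Finset.mem_univ j)).trans (le_max_right _ _)) (hm j), ?_⟩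
  intro j
  simpa [hvA] using hAv j

theorem frame_expand {f : X → Y} {W : Set X} (hW : IsOpen W) {x : X} (hx : x ∈ W) {r n : ℕ}
    (hr : Module.finrank ℝ (Submodule.span ℝ (PC f x)) = r) {vA}
    (h : Frame f W r n x vA) {η : Y →L[ℝ] ℝ} (hη : η ∈ Submodule.span ℝ (PC f x)) :
    η = ∑ j, vA.2 η j • vA.1 j := by
  obtain ⟨-, h1, h2⟩ := h
  have hli : LinearIndependent ℝ vA.1 := by
    refine LinearIndependent.of_comp (vA.2 : (Y →L[ℝ] ℝ) →ₗ[ℝ] (Fin r → ℝ)) ?_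
    convert (Pi.basisFun ℝ (Fin r)).linearIndependent using 1
    ext j : 1
    simp [h2]
  have hle : Submodule.span ℝ (Set.range vA.1) ≤ Submodule.span ℝ (PC f x) := by
    apply Submodule.span_mono
    rintro _ ⟨j, rfl⟩
    exact PCn_sub hW hx n (h1 j)
  have heq := Submodule.eq_of_le_of_finrank_eq hle (by
    rw [finrank_span_eq_card hli, hr, Fintype.card_fin])
  rw [← heq] at hη
  obtain ⟨c, hc⟩ := (Submodule.mem_span_range_iff_exists_fun ℝ).1 hη
  have hcA : vA.2 η = c := by
    rw [← hc, map_sum]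
    simp only [map_smul, h2]
    ext j
    simp [Finset.sum_apply, Pi.single_apply]
  rw [hcA, hc]

theorem bdd_subseq {E : Type*} [NormedAddCommGroup E] [NormedSpace ℝ E] [FiniteDimensional ℝ E]
    (u : ℕ → E) (n : ℝ) (h : ∀ i, ‖u i‖ ≤ n) :
    ∃ w, ‖w‖ ≤ n ∧ ∃ φ : ℕ → ℕ, StrictMono φ ∧ Tendsto (u ∘ φ) atTop (𝓝 w) := by
  have : ProperSpace E := FiniteDimensional.proper ℝ E
  obtain ⟨w, hw, φ, hφ, hlim⟩ := (isCompact_closedBall (0 : E) n).tendsto_subseq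
    (x := u) (fun i => by rw [mem_closedBall_zero_iff]; exact h i)
  exact ⟨w, mem_closedBall_zero_iff.1 hw, φ, hφ, hlim⟩

theorem frame_limit {f : X → Y} {W : Set X} (hW : IsOpen W) (hf : ContDiffOn ℝ 1 f W) {x : X}
    (hx : x ∈ W) {r n : ℕ} {u : ℕ → X} (hu : Tendsto u atTop (𝓝 x)) {vA : ℕ → _}
    (h : ∀ i, Frame f W r n (u i) (vA i)) :
    ∃ wB, Frame f W r n x wB ∧ ∃ φ : ℕ → ℕ, StrictMono φ ∧
      Tendsto (vA ∘ φ) atTop (𝓝 wB) := by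
  obtain ⟨wB, hwB, φ, hφ, hlim⟩ := bdd_subseq vA (n : ℝ) (fun i => (h i).1)
  have hv : ∀ j, Tendsto (fun i => (vA (φ i)).1 j) atTop (𝓝 (wB.1 j)) := fun j =>
    ((continuous_apply j).comp continuous_fst).continuousAt.tendsto.comp hlim
  have hA : Tendsto (fun i => (vA (φ i)).2) atTop (𝓝 wB.2) :=
    continuous_snd.continuousAt.tendsto.comp hlim
  refine ⟨wB, ⟨hwB, fun j => ?_, fun j => ?_⟩, φ, hφ, hlim⟩
  · exact PCn_closed hW hf hx (hu.comp hφ.tendsto_atTop) (hv j) (fun i => (h (φ i)).2.1 j)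
  · have h1 : Tendsto (fun i => (vA (φ i)).2 ((vA (φ i)).1 j)) atTop (𝓝 (wB.2 (wB.1 j))) :=
      (isBoundedBilinearMap_apply.continuous.tendsto (wB.2, wB.1 j)).comp (hA.prodMk_nhds (hv j))
    refine tendsto_nhds_unique h1 ?_
    simp only [(h _).2.2 j]
    exact tendsto_const_nhds

theorem span_top {f : X → Y} {W : Set X} (hW : IsOpen W) (hf : ContDiffOn ℝ 1 f W)
    (hne : W.Nonempty) (hh : ∀ x ∈ W, ∀ x' ∈ W, GRel 2 f x x') :
    ∀ x ∈ W, Submodule.span ℝ (PC f x) = ⊤ := by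
  obtain ⟨a, ha⟩ := hne
  set r := Module.finrank ℝ (Submodule.span ℝ (PC f a)) with hrdef
  have hr : ∀ x ∈ W, Module.finrank ℝ (Submodule.span ℝ (PC f x)) = r := fun x hx =>
    le_antisymm (span_finrank_le hW hf ha hx (hh a ha x hx))
      (span_finrank_le hW hf hx ha (hh x hx a ha))
  obtain ⟨n, x0, hx0, hF⟩ := baire_open hW ⟨a, ha⟩ (fun n : ℕ => {x | ∃ vA, Frame f W r n x vA})
    (by
      intro n x hx hcl
      obtain ⟨u, hu, hux⟩ := mem_closure_iff_seq_limit.1 hcl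
      choose vA hvA using fun i => (hu i).1
      obtain ⟨wB, hwB, -⟩ := frame_limit hW hf hx hux hvA
      exact ⟨wB, hwB⟩)
    (fun x hx => frame_exists (hr x hx))
  have htop : Submodule.span ℝ (PC f x0) = ⊤ := by
    rw [eq_top_iff]
    rintro η -
    obtain ⟨ε, hε, hb⟩ := Metric.mem_nhds_iff.1 (inter_mem hF (hW.mem_nhds hx0))
    have hex : ∀ i : ℕ, ∃ x ∈ ball x0 (ε * (1 / ((i : ℝ) + 1))), η ∈ PC f x ∧
        x ∈ W ∧ ∃ vA, Frame f W r n x vA := fun i => by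
      have hpos : 0 < ε * (1 / ((i : ℝ) + 1)) := by positivity
      have hle : ε * (1 / ((i : ℝ) + 1)) ≤ ε := by
        refine mul_le_of_le_one_right hε.le ?_
        rw [div_le_one (by positivity)]
        linarith [(Nat.cast_nonneg i : (0 : ℝ) ≤ i)]
      have hsub := (ball_subset_ball (x := x0) hle).trans hb
      obtain ⟨x, hx, hxη⟩ := touch hf hW isOpen_ball (fun y hy => (hsub hy).2)
        ⟨x0, mem_ball_self hpos⟩ η
      exact ⟨x, hx, hxη, (hsub hx).2, (hsub hx).1⟩
    choose u hu huη huW vA hvA using hex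
    have hux : Tendsto u atTop (𝓝 x0) := by
      rw [tendsto_iff_dist_tendsto_zero]
      refine squeeze_zero (fun _ => dist_nonneg) (fun i => (mem_ball.1 (hu i)).le) ?_
      simpa using (tendsto_one_div_add_atTop_nhds_zero_nat (𝕜 := ℝ)).const_mul ε
    obtain ⟨wB, hwB, φ, hφ, hlim⟩ := frame_limit hW hf hx0 hux hvA
    have h1 : ∀ i, η = ∑ j, (vA (φ i)).2 η j • (vA (φ i)).1 j := fun i =>
      frame_expand hW (huW _) (hr _ (huW _)) (hvA _) (Submodule.subset_span (huη _))
    have hcont : Continuous (fun p : (Fin r → (Y →L[ℝ] ℝ)) × ((Y →L[ℝ] ℝ) →L[ℝ] (Fin r → ℝ)) =>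
        ∑ j, p.2 η j • p.1 j) := by fun_prop
    have h2 : η = ∑ j, wB.2 η j • wB.1 j := by
      refine tendsto_nhds_unique ?_ ((hcont.tendsto wB).comp hlim)
      have : ((fun p : (Fin r → (Y →L[ℝ] ℝ)) × ((Y →L[ℝ] ℝ) →L[ℝ] (Fin r → ℝ)) =>
        ∑ j, p.2 η j • p.1 j) ∘ (vA ∘ φ)) = fun _ => η := by
        funext i
        exact (h1 i).symm
      rw [this]
      exact tendsto_const_nhds
    rw [h2]
    exact Submodule.sum_mem _ fun j _ => Submodule.smul_mem _ _
      (Submodule.subset_span (PCn_sub hW hx0 n (hwB.2.1 j)))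
  intro x hx
  apply Submodule.eq_top_of_finrank_eq
  rw [hr x hx, ← hr x0 hx0, htop, finrank_top]

theorem PC_univ {f : X → Y} {W : Set X} (hW : IsOpen W) (hf : ContDiffOn ℝ 1 f W)
    (hne : W.Nonempty) (hh : ∀ x ∈ W, ∀ x' ∈ W, GRel 2 f x x') :
    ∀ x ∈ W, ∀ ζ, ζ ∈ PC f x := by
  have hspan := span_top hW hf hne hh
  have h1 : ∀ x ∈ W, ∃ η n, PCn f W n x ∈ 𝓝 η := by
    intro x hx
    set r := Module.finrank ℝ (Submodule.span ℝ (PC f x)) with hr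
    obtain ⟨m, vA, hF⟩ := frame_exists (W := W) hr.symm
    have hO : IsOpen {η : Y →L[ℝ] ℝ | ∀ j, 0 < vA.2 η j} := by
      simp only [Set.ofPred_forall]
      exact isOpen_iInter_of_finite fun j => isOpen_lt continuous_const (by fun_prop)
    have hOne : {η : Y →L[ℝ] ℝ | ∀ j, 0 < vA.2 η j}.Nonempty := by
      refine ⟨∑ j, vA.1 j, fun j => ?_⟩
      rw [map_sum]
      simp [hF.2.2, Finset.sum_apply, Pi.single_apply]
    obtain ⟨n, η, -, hη⟩ := baire_open hO hOne (fun n : ℕ => PCn f W n x)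
      (by
        intro n η _ hcl
        obtain ⟨v, hv, hvη⟩ := mem_closure_iff_seq_limit.1 hcl
        exact PCn_closed hW hf hx (u := fun _ => x) tendsto_const_nhds hvη (fun i => (hv i).1))
      (by
        intro η hη
        refine PC_exists ?_
        rw [frame_expand hW hx hr.symm hF (η := η) (by rw [hspan x hx]; trivial)]
        have key : ∀ s : Finset (Fin r), ∑ j ∈ s, vA.2 η j • vA.1 j ∈ PC f x := by
          intro s
          induction s using Finset.induction_on with
          | empty =>
            refine ⟨0, Eventually.of_forall fun z => ?_⟩
            simp
          | insert j s hj ih =>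
            rw [Finset.sum_insert hj]
            exact PC_add (PC_smul (PCn_sub hW hx m (hF.2.1 j)) (hη j).le) ih
        exact key _)
    exact ⟨η, n, hη⟩
  have h2 : ∃ x ∈ W, ∀ ζ, ζ ∈ PC f x := by
    obtain ⟨⟨i, n⟩, x0, hx0, hF⟩ := baire_open hW hne
      (fun p : ℕ × ℕ => {x | ball (TopologicalSpace.denseSeq (Y →L[ℝ] ℝ) p.1)
        (1 / ((p.2 : ℝ) + 1)) ⊆ PCn f W p.2 x})
      (by
        rintro ⟨i, n⟩ x hx hcl η hη
        obtain ⟨u, hu, hux⟩ := mem_closure_iff_seq_limit.1 hcl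
        exact PCn_closed hW hf hx hux (v := fun _ => η) tendsto_const_nhds
          (fun i => (hu i).1 hη))
      (by
        intro x hx
        obtain ⟨η, n, hη⟩ := h1 x hx
        obtain ⟨ε, hε, hb⟩ := Metric.mem_nhds_iff.1 hη
        obtain ⟨m, hm⟩ := exists_nat_one_div_lt (half_pos hε)
        obtain ⟨i, hi⟩ := (TopologicalSpace.denseRange_denseSeq (Y →L[ℝ] ℝ)).exists_dist_lt η
          (half_pos hε)
        refine ⟨(i, max m n), fun ζ hζ => PCn_mono (le_max_right m n) (hb ?_)⟩
        rw [mem_ball] at hζ ⊢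
        have h3 : (1 : ℝ) / (((max m n : ℕ) : ℝ) + 1) ≤ 1 / ((m : ℝ) + 1) := by
          gcongr
          exact le_max_left _ _
        have h4 := dist_triangle ζ (TopologicalSpace.denseSeq (Y →L[ℝ] ℝ) i) η
        rw [dist_comm] at hi
        simp only at hζ
        linarith)
    simp only at hF
    set η := TopologicalSpace.denseSeq (Y →L[ℝ] ℝ) i
    obtain ⟨V, hVs, hV, hxV⟩ := _root_.mem_nhds_iff.1 (inter_mem hF (hW.mem_nhds hx0))
    obtain ⟨x, hxV, hx⟩ := touch hf hW hV (fun y hy => (hVs hy).2) ⟨x0, hxV⟩ (-η)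
    refine ⟨x, (hVs hxV).2, fun ζ => ?_⟩
    have hpos : (0 : ℝ) < 1 / ((n : ℝ) + 1) := by positivity
    set δ : ℝ := (1 / ((n : ℝ) + 1)) / (‖ζ‖ + 1) with hδ
    have hζ1 : 0 < ‖ζ‖ + 1 := by positivity
    have hδ0 : 0 < δ := by positivity
    have hmem : η + δ • ζ ∈ PC f x := by
      refine PCn_sub hW (hVs hxV).2 n ((hVs hxV).1 ?_)
      rw [mem_ball, dist_eq_norm, add_sub_cancel_left, norm_smul, Real.norm_of_nonneg hδ0.le]
      calc δ * ‖ζ‖ < δ * (‖ζ‖ + 1) := by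
            apply mul_lt_mul_of_pos_left _ hδ0
            linarith
        _ = 1 / ((n : ℝ) + 1) := by rw [hδ]; field_simp
    have h5 := PC_smul (PC_add hx hmem) (inv_nonneg.2 hδ0.le)
    rwa [neg_add_cancel_left, smul_smul, inv_mul_cancel₀ hδ0.ne', one_smul] at h5
  obtain ⟨x', hx', hall⟩ := h2
  intro x hx ζ
  obtain ⟨T, hT, hTP⟩ := transfer_PC hW hf hx hx' (hh x hx x' hx')
  obtain ⟨η, rfl⟩ := LinearMap.injective_iff_surjective.1 hT ζ
  exact hTP η (hall η)

theorem rho_bound {f : X → Y} {x : X} (h : ∀ ζ, ζ ∈ PC f x) :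
    ∃ C : ℝ, ∀ᶠ z in 𝓝 x, ‖rho f x z‖ ≤ C * ‖z - x‖ ^ 2 := by
  set b := Module.finBasis ℝ Y
  have h1 : ∀ i, ∃ C : ℝ, ∀ᶠ z in 𝓝 x, |b.repr (rho f x z) i| ≤ C * ‖z - x‖ ^ 2 := fun i => by
    obtain ⟨C, hC⟩ := h (LinearMap.toContinuousLinearMap (b.coord i))
    obtain ⟨C', hC'⟩ := h (-(LinearMap.toContinuousLinearMap (b.coord i)))
    refine ⟨max C C', ?_⟩
    filter_upwards [hC, hC'] with z h1 h2
    simp at h1 h2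
    rw [abs_le']
    constructor
    · refine h1.trans ?_
      gcongr
      exact le_max_left _ _
    · refine (le_trans (le_of_eq ?_) h2).trans ?_
      · simp
      · gcongr
        exact le_max_right _ _
  choose C hC using h1
  refine ⟨∑ i, C i * ‖b i‖, ?_⟩
  filter_upwards [eventually_all.2 hC] with z hz
  calc ‖rho f x z‖ = ‖∑ i, b.repr (rho f x z) i • b i‖ := by rw [b.sum_repr]
    _ ≤ ∑ i, ‖b.repr (rho f x z) i • b i‖ := norm_sum_le _ _
    _ ≤ ∑ i, C i * ‖z - x‖ ^ 2 * ‖b i‖ := by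
        refine Finset.sum_le_sum fun i _ => ?_
        rw [norm_smul]
        exact mul_le_mul_of_nonneg_right (hz i) (norm_nonneg _)
    _ = (∑ i, C i * ‖b i‖) * ‖z - x‖ ^ 2 := by
        rw [Finset.sum_mul]
        exact Finset.sum_congr rfl fun i _ => by ring

theorem exists_lip {f : X → Y} {W : Set X} (hW : IsOpen W) (hf : ContDiffOn ℝ 1 f W)
    (hne : W.Nonempty) (hh : ∀ x ∈ W, ∀ x' ∈ W, GRel 2 f x x') :
    ∃ x ∈ W, ∃ s > 0, ball x s ⊆ W ∧ ∃ K, LipschitzOnWith K (fderiv ℝ f) (ball x s) := by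
  have hP := PC_univ hW hf hne hh
  obtain ⟨n, x0, hx0, hF⟩ := baire_open hW hne
    (fun n : ℕ => {x | ∀ z ∈ W, ‖z - x‖ < 1 / ((n : ℝ) + 1) → ‖rho f x z‖ ≤ n * ‖z - x‖ ^ 2})
    (by
      intro n x hx hcl z hz hzx
      obtain ⟨u, hu, hux⟩ := mem_closure_iff_seq_limit.1 hcl
      have h1 : Tendsto (fun a => rho f (u a) z) atTop (𝓝 (rho f x z)) :=
        (rho_tendsto hW hf hx z).tendsto.comp hux
      have h3 : Tendsto (fun a => ‖z - u a‖) atTop (𝓝 ‖z - x‖) :=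
        (tendsto_const_nhds.sub hux).norm
      refine le_of_tendsto_of_tendsto h1.norm ((h3.pow 2).const_mul (n : ℝ)) ?_
      filter_upwards [h3.eventually_lt_const hzx] with a ha
      exact (hu a).1 z hz ha)
    (by
      intro x hx
      obtain ⟨C, hC⟩ := rho_bound (hP x hx)
      obtain ⟨ε, hε, hb⟩ := Metric.eventually_nhds_iff.1 hC
      obtain ⟨n1, hn1⟩ := exists_nat_one_div_lt hε
      obtain ⟨n2, hn2⟩ := exists_nat_ge C
      refine ⟨max n1 n2, fun z _ hzx => ?_⟩
      refine (hb (y := z) ?_).trans ?_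
      · rw [dist_eq_norm]
        refine hzx.trans (lt_of_le_of_lt ?_ hn1)
        gcongr
        exact le_max_left _ _
      · gcongr
        refine hn2.trans ?_
        exact_mod_cast le_max_right _ _)
  obtain ⟨ε, hε, hb⟩ := Metric.mem_nhds_iff.1 (inter_mem hF (hW.mem_nhds hx0))
  have hpos : (0 : ℝ) < 1 / ((n : ℝ) + 1) := by positivity
  set s := min (ε / 3) (1 / ((n : ℝ) + 1) / 4) with hs
  have hs0 : 0 < s := by positivity
  have hs1 : 3 * s ≤ ε := by have := min_le_left (ε / 3) (1 / ((n : ℝ) + 1) / 4); linarith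
  have hs2 : 4 * s ≤ 1 / ((n : ℝ) + 1) := by
    have := min_le_right (ε / 3) (1 / ((n : ℝ) + 1) / 4); linarith
  have hsub : ball x0 s ⊆ ball x0 ε := ball_subset_ball (by linarith)
  refine ⟨x0, hx0, s, hs0, fun y hy => (hb (hsub hy)).2, (6 * n : ℕ), ?_⟩
  refine LipschitzOnWith.of_dist_le_mul fun y hy x hx => ?_
  rw [dist_eq_norm, dist_eq_norm]
  refine ContinuousLinearMap.opNorm_le_bound _ (by positivity) fun w => ?_
  rcases eq_or_ne w 0 with rfl | hw
  · simp
  rcases eq_or_ne y x with rfl | hyx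
  · simp
  set δ := ‖y - x‖ with hδ
  have hδ0 : 0 < δ := norm_pos_iff.2 (sub_ne_zero.2 hyx)
  have hw0 : 0 < ‖w‖ := norm_pos_iff.2 hw
  have hy' : ‖y - x0‖ < s := by simpa [dist_eq_norm] using hy
  have hx' : ‖x - x0‖ < s := by simpa [dist_eq_norm] using hx
  have hδs : δ < 2 * s := by
    have : y - x = (y - x0) - (x - x0) := by abel
    rw [hδ, this]
    linarith [norm_sub_le (y - x0) (x - x0)]
  set v := (δ / ‖w‖) • w with hv
  have hvn : ‖v‖ = δ := by
    rw [hv, norm_smul, Real.norm_of_nonneg (by positivity)]; field_simp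
  set z := y + v with hz
  have hzx0 : z ∈ ball x0 ε := by
    rw [mem_ball, dist_eq_norm]
    have : z - x0 = (y - x0) + v := by rw [hz]; abel
    rw [this]
    linarith [norm_add_le (y - x0) v]
  have hzx : ‖z - x‖ ≤ 2 * δ := by
    have : z - x = (y - x) + v := by rw [hz]; abel
    rw [this]
    linarith [norm_add_le (y - x) v]
  have hzy : ‖z - y‖ = δ := by rw [hz, add_sub_cancel_left, hvn]
  have r1 : ‖rho f x z‖ ≤ n * (2 * δ) ^ 2 :=
    ((hb (hsub hx)).1 z (hb hzx0).2 (by linarith)).trans (by gcongr)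
  have r2 : ‖rho f y z‖ ≤ n * δ ^ 2 := by
    have := (hb (hsub hy)).1 z (hb hzx0).2 (by linarith)
    rwa [hzy] at this
  have r3 : ‖rho f x y‖ ≤ n * δ ^ 2 :=
    (hb (hsub hx)).1 y (hb (hsub hy)).2 (by linarith)
  have e : (fderiv ℝ f y - fderiv ℝ f x) v = rho f x z - rho f y z - rho f x y := by
    have e1 : z - x = (y - x) + v := by rw [hz]; abel
    have e2 : z - y = v := by rw [hz]; abel
    rw [rho, rho, rho, e1, e2, sub_apply, map_add]
    abel
  have hfin : ‖(fderiv ℝ f y - fderiv ℝ f x) v‖ ≤ 6 * n * δ ^ 2 := by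
    rw [e]
    refine (norm_sub_le _ _).trans ?_
    have := norm_sub_le (rho f x z) (rho f y z)
    nlinarith
  rw [hv, map_smul, norm_smul, Real.norm_of_nonneg (by positivity)] at hfin
  have h7 : δ / ‖w‖ * ‖(fderiv ℝ f y - fderiv ℝ f x) w‖ ≤ δ / ‖w‖ * (6 * n * δ * ‖w‖) := by
    refine hfin.trans (le_of_eq ?_)
    field_simp
  have h8 := le_of_mul_le_mul_left h7 (by positivity)
  simpa using h8

theorem exists_diff {f : X → Y} {W : Set X} (hW : IsOpen W) (hf : ContDiffOn ℝ 1 f W)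
    (hne : W.Nonempty) (hh : ∀ x ∈ W, ∀ x' ∈ W, GRel 2 f x x') :
    ∃ x ∈ W, DifferentiableAt ℝ (fderiv ℝ f) x := by
  obtain ⟨x, hx, s, hs, hsW, K, hK⟩ := exists_lip hW hf hne hh
  let _ : MeasurableSpace X := borel X
  have : BorelSpace X := ⟨rfl⟩
  have hae := hK.ae_differentiableWithinAt_of_mem (μ := MeasureTheory.Measure.addHaar)
  have hpos : MeasureTheory.Measure.addHaar (ball x s) ≠ 0 :=
    (Metric.measure_ball_pos _ x hs).ne'
  obtain ⟨y, hy, hyd⟩ := (MeasureTheory.frequently_ae_mem_iff.2 hpos).and_eventually hae |>.exists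
  exact ⟨y, hsW hy, (hyd hy).differentiableAt (isOpen_ball.mem_nhds hy)⟩

/-- Points near which `g` is almost linear up to `ε`. -/
def Om {V : Type} [NormedAddCommGroup V] [NormedSpace ℝ V] (g : X → V) (ε : ℝ) : Set X :=
  {x | ∃ A : X →L[ℝ] V, ∃ s ∈ 𝓝 x, ∀ y ∈ s, ∀ z ∈ s, ‖g y - g z - A (y - z)‖ ≤ ε * ‖y - z‖}

theorem Om_open {g : X → Y} (ε : ℝ) : IsOpen (Om g ε) := by
  rw [isOpen_iff_mem_nhds]
  rintro x ⟨A, s, hs, h⟩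
  filter_upwards [eventually_mem_nhds_iff.2 hs] with y hy
  exact ⟨A, s, hy, h⟩

theorem Om_meets {g : X → Y} {U : Set X} (hU : IsOpen U) (hne : U.Nonempty)
    (hg : ∀ x ∈ U, DifferentiableAt ℝ g x) {ε : ℝ} (hε : 0 < ε) : ∃ x ∈ U, x ∈ Om g ε := by
  obtain ⟨⟨n, i⟩, x0, hx0, hF⟩ := baire_open hU hne
    (fun p : ℕ × ℕ => {x | ∀ z ∈ U, ‖z - x‖ < 1 / ((p.1 : ℝ) + 1) →
      ‖g z - g x - TopologicalSpace.denseSeq (X →L[ℝ] Y) p.2 (z - x)‖ ≤ ε * ‖z - x‖})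
    (by
      rintro ⟨n, i⟩ x hx hcl z hz hzx
      obtain ⟨u, hu, hux⟩ := mem_closure_iff_seq_limit.1 hcl
      have h0 : Tendsto (fun a => g (u a)) atTop (𝓝 (g x)) :=
        (hg x hx).continuousAt.tendsto.comp hux
      have h2 : Tendsto (fun a => z - u a) atTop (𝓝 (z - x)) := tendsto_const_nhds.sub hux
      have h1 : Tendsto (fun a => g z - g (u a) -
          TopologicalSpace.denseSeq (X →L[ℝ] Y) i (z - u a)) atTop
          (𝓝 (g z - g x - TopologicalSpace.denseSeq (X →L[ℝ] Y) i (z - x))) :=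
        (tendsto_const_nhds.sub h0).sub
          (((TopologicalSpace.denseSeq (X →L[ℝ] Y) i).continuous.tendsto _).comp h2)
      refine le_of_tendsto_of_tendsto h1.norm (h2.norm.const_mul ε) ?_
      filter_upwards [h2.norm.eventually_lt_const hzx] with a ha
      exact (hu a).1 z hz ha)
    (by
      intro x hx
      obtain ⟨i, hi⟩ := (TopologicalSpace.denseRange_denseSeq (X →L[ℝ] Y)).exists_dist_lt
        (fderiv ℝ g x) (half_pos hε)
      have hd := (hg x hx).hasFDerivAt.isLittleO
      rw [Asymptotics.isLittleO_iff] at hd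
      obtain ⟨r, hr, hb⟩ := Metric.eventually_nhds_iff.1 (hd (half_pos hε))
      obtain ⟨n, hn⟩ := exists_nat_one_div_lt hr
      refine ⟨(n, i), fun z _ hzx => ?_⟩
      have h1 := hb (y := z) (by rw [dist_eq_norm]; exact hzx.trans hn)
      have h2 := (fderiv ℝ g x - TopologicalSpace.denseSeq (X →L[ℝ] Y) i).le_opNorm (z - x)
      rw [dist_eq_norm] at hi
      have h3 := mul_le_mul_of_nonneg_right hi.le (norm_nonneg (z - x))
      have h4 : g z - g x - TopologicalSpace.denseSeq (X →L[ℝ] Y) i (z - x) =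
        (g z - g x - fderiv ℝ g x (z - x)) +
          (fderiv ℝ g x - TopologicalSpace.denseSeq (X →L[ℝ] Y) i) (z - x) := by
        rw [sub_apply]; abel
      simp only
      rw [h4]
      refine (norm_add_le _ _).trans ?_
      linarith)
  simp only at hF
  obtain ⟨r, hr, hb⟩ := Metric.mem_nhds_iff.1 (inter_mem hF (hU.mem_nhds hx0))
  have hpos : (0 : ℝ) < 1 / ((n : ℝ) + 1) := by positivity
  refine ⟨x0, hx0, TopologicalSpace.denseSeq (X →L[ℝ] Y) i,
    ball x0 (min r (1 / ((n : ℝ) + 1) / 2)), ball_mem_nhds _ (by positivity), ?_⟩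
  intro y hy z hz
  have hy1 := ball_subset_ball (min_le_left _ _) hy
  have hz1 := ball_subset_ball (min_le_left _ _) hz
  have hy2 := ball_subset_ball (min_le_right _ _) hy
  have hz2 := ball_subset_ball (min_le_right _ _) hz
  refine (hb hz1).1 y (hb hy1).2 ?_
  rw [mem_ball] at hy2 hz2
  rw [← dist_eq_norm]
  linarith [dist_triangle_right y z x0]

theorem strict_point {g : X → Y} {U : Set X} (hU : IsOpen U) (hne : U.Nonempty)
    (hg : ∀ x ∈ U, DifferentiableAt ℝ g x) : ∃ x ∈ U, HasStrictFDerivAt g (fderiv ℝ g x) x := by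
  have h1 : ∃ x ∈ U, ∀ m : ℕ, x ∈ Om g (1 / ((m : ℝ) + 1)) := by
    by_contra hcon
    push Not at hcon
    obtain ⟨m, x0, hx0, hF⟩ := baire_open hU hne (fun m : ℕ => (Om g (1 / ((m : ℝ) + 1)))ᶜ)
      (by
        intro m x _ hcl
        exact ((Om_open _).isClosed_compl.closure_subset) (closure_mono inter_subset_left hcl))
      (fun x hx => hcon x hx)
    obtain ⟨O, hOs, hO, hxO⟩ := _root_.mem_nhds_iff.1 (inter_mem hF (hU.mem_nhds hx0))
    obtain ⟨x, hx, hxm⟩ := Om_meets hO ⟨x0, hxO⟩ (fun x hx => hg x (hOs hx).2)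
      (ε := 1 / ((m : ℝ) + 1)) (by positivity)
    exact (hOs hx).1 hxm
  obtain ⟨x, hx, hm⟩ := h1
  refine ⟨x, hx, .of_isLittleO ?_⟩
  rw [Asymptotics.isLittleO_iff]
  intro c hc
  obtain ⟨m, hmc⟩ := exists_nat_one_div_lt (half_pos hc)
  obtain ⟨A, s, hs, h⟩ := hm m
  have h2 : ‖fderiv ℝ g x - A‖ ≤ 1 / ((m : ℝ) + 1) := by
    refine ((hg x hx).hasFDerivAt.sub A.hasFDerivAt).le_of_lip' (by positivity) ?_
    filter_upwards [hs] with y hy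
    have := h y hy x (mem_of_mem_nhds hs)
    rw [map_sub] at this
    convert this using 2
    simp only [Pi.sub_apply]
    abel
  filter_upwards [prod_mem_nhds hs hs] with p hp
  have h3 := h p.1 hp.1 p.2 hp.2
  have h4 := (fderiv ℝ g x - A).le_opNorm (p.1 - p.2)
  have h5 : g p.1 - g p.2 - fderiv ℝ g x (p.1 - p.2) = (g p.1 - g p.2 - A (p.1 - p.2)) -
      (fderiv ℝ g x - A) (p.1 - p.2) := by rw [sub_apply]; abel
  rw [h5]
  refine (norm_sub_le _ _).trans ?_
  have h6 := norm_nonneg (p.1 - p.2)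
  nlinarith

theorem transfer_eq {f : X → Y} {W : Set X} (hW : IsOpen W) (hf : ContDiffOn ℝ 1 f W)
    {x x' : X} (hx : x ∈ W) (hx' : x' ∈ W) (h : GRel 2 f x x') :
    ∃ (Φ : X × (Y × (X →L[ℝ] Y)) → Y × (X →L[ℝ] Y)) (h' : X → X),
      ContDiffAt ℝ 1 Φ (x, (f x, fderiv ℝ f x)) ∧ ContDiffAt ℝ 1 h' x' ∧ h' x' = x ∧
      (fun z => (f z, fderiv ℝ f z)) =ᶠ[𝓝 x'] fun y => Φ (h' y, (f (h' y), fderiv ℝ f (h' y))) := by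
  obtain ⟨H, H', h1, h2⟩ := h
  have hp := half_prol (k := 1) hW hf hx hx' h1 h2
  have hfx' : ContDiffAt ℝ 1 f x' := hf.contDiffAt (hW.mem_nhds hx')
  have hgr : ContDiffAt ℝ 1 (fun y => (y, f y)) x' := contDiffAt_id.prodMk hfx'
  have hH' : ContDiffAt ℝ 1 (fun y => (H' (y, f y)).1) x' :=
    (ContDiffAt.comp (f := fun y => (y, f y)) x'
      (h2.smooth.of_le (by exact_mod_cast one_le_two)) hgr).fst
  have hb : (H' (x', f x')).1 = x := by rw [h2.base]
  refine ⟨fun w => (prol H w).2, fun y => (H' (y, f y)).1, ?_, hH', hb, ?_⟩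
  · exact hp.smooth.snd
  · have hc : Tendsto (fun y => (H' (y, f y)).1) (𝓝 x') (𝓝 x) := by
      have := hH'.continuousAt.tendsto
      rwa [hb] at this
    filter_upwards [h2.graph, hgr.continuousAt.eventually h2.inv, hc.eventually hp.graph]
      with y y1 y2 y3
    rw [y3]
    have : (H ((H' (y, f y)).1, f (H' (y, f y)).1)).1 = y := by
      rw [← y1, Prod.mk.eta, y2]
    simp only [prol, this]

theorem g_c1 {f : X → Y} {W : Set X} (hW : IsOpen W) (hf : ContDiffOn ℝ 1 f W)
    (hne : W.Nonempty) (hh : ∀ x ∈ W, ∀ x' ∈ W, GRel 2 f x x') :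
    ContDiffOn ℝ 1 (fun z => (f z, fderiv ℝ f z)) W := by
  set g := fun z => (f z, fderiv ℝ f z) with hg
  have hd : ∀ y ∈ W, DifferentiableAt ℝ f y := fun y hy =>
    (hf.differentiableOn one_ne_zero).differentiableAt (hW.mem_nhds hy)
  obtain ⟨x0, hx0, hdx0⟩ := exists_diff hW hf hne hh
  have hgd : ∀ x ∈ W, DifferentiableAt ℝ g x := by
    intro x hx
    obtain ⟨Φ, h', hΦ, hh', hb, he⟩ := transfer_eq hW hf hx0 hx (hh x0 hx0 x hx)
    have hg0 : DifferentiableAt ℝ (fun z => (z, g z)) x0 :=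
      differentiableAt_id.prodMk ((hd x0 hx0).prodMk hdx0)
    have h3 : DifferentiableAt ℝ (Φ ∘ (fun z => (z, g z))) x0 :=
      DifferentiableAt.comp x0 (hΦ.differentiableAt one_ne_zero) hg0
    rw [← hb] at h3
    exact (h3.comp x (hh'.differentiableAt one_ne_zero)).congr_of_eventuallyEq he
  obtain ⟨x1, hx1, hs1⟩ := strict_point hW hne hgd
  have hgs : ∀ x ∈ W, HasStrictFDerivAt g (fderiv ℝ g x) x := by
    intro x hx
    obtain ⟨Φ, h', hΦ, hh', hb, he⟩ := transfer_eq hW hf hx1 hx (hh x1 hx1 x hx)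
    have hg0 : HasStrictFDerivAt (fun z => (z, g z)) _ x1 :=
      (hasStrictFDerivAt_id x1).prodMk hs1
    have h3 := HasStrictFDerivAt.comp (g := Φ) (f := fun z => (z, g z)) x1
      (hΦ.hasStrictFDerivAt one_ne_zero) hg0
    rw [← hb] at h3
    have h4 := (HasStrictFDerivAt.comp (g := fun z => Φ (z, g z)) x h3 (hh'.hasStrictFDerivAt one_ne_zero)).congr_of_eventuallyEq he.symm
    have := h4.hasFDerivAt.fderiv
    rwa [← this] at h4
  rw [← zero_add (1 : WithTop ℕ∞), contDiffOn_succ_iff_fderiv_of_isOpen hW, contDiffOn_zero]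
  refine ⟨fun x hx => (hgd x hx).differentiableWithinAt, by simp, fun x hx => ?_⟩
  apply ContinuousAt.continuousWithinAt
  rw [Metric.continuousAt_iff]
  intro ε hε
  have h5 := (hgs x hx).isLittleO
  rw [Asymptotics.isLittleO_iff] at h5
  have h6 := h5 (half_pos hε)
  rw [nhds_prod_eq] at h6
  obtain ⟨P, hP, Q, hQ, hPQ⟩ := eventually_prod_iff.1 h6
  obtain ⟨r, hr, hb⟩ := Metric.eventually_nhds_iff.1 (((hP.and hQ).and (hW.mem_nhds hx)).eventually_nhds)
  refine ⟨r, hr, fun {y} hy => ?_⟩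
  have h7 := hb hy
  rw [dist_eq_norm]
  refine lt_of_le_of_lt ?_ (half_lt_self hε)
  refine ((hgd y h7.self_of_nhds.2).hasFDerivAt.sub
    (fderiv ℝ g x).hasFDerivAt).le_of_lip' (by positivity) ?_
  filter_upwards [h7] with z hz
  have := hPQ hz.1.1 h7.self_of_nhds.1.2
  simp only [map_sub] at this
  have e : g z - fderiv ℝ g x z - (g y - fderiv ℝ g x y) =
    g z - g y - (fderiv ℝ g x z - fderiv ℝ g x y) := by abel
  change ‖g z - fderiv ℝ g x z - (g y - fderiv ℝ g x y)‖ ≤ _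
  rw [e]
  exact this

end Core

theorem core_smooth {X : Type} [NormedAddCommGroup X] [InnerProductSpace ℝ X]
    [FiniteDimensional ℝ X] (k : ℕ) : ∀ {Y : Type} [NormedAddCommGroup Y] [NormedSpace ℝ Y]
    [FiniteDimensional ℝ Y] {f : X → Y} {W : Set X}, IsOpen W → ContDiffOn ℝ 1 f W → W.Nonempty →
    (∀ x ∈ W, ∀ x' ∈ W, GRel (k + 1) f x x') → ContDiffOn ℝ ((k + 1 : ℕ) : WithTop ℕ∞) f W := by
  induction k with
  | zero =>
    intro Y _ _ _ f W hW hf hne hh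
    simpa using hf
  | succ k ih =>
    intro Y _ _ _ f W hW hf hne hh
    have hh2 : ∀ x ∈ W, ∀ x' ∈ W, GRel 2 f x x' := by
      intro x hx x' hx'
      obtain ⟨H, H', h1, h2⟩ := hh x hx x' hx'
      have hle : ((2 : ℕ) : WithTop ℕ∞) ≤ ((k + 1 + 1 : ℕ) : WithTop ℕ∞) := by
        exact_mod_cast (by omega : 2 ≤ k + 1 + 1)
      exact ⟨H, H', ⟨h1.smooth.of_le hle, h1.base, h1.inv, h1.graph⟩,
        ⟨h2.smooth.of_le hle, h2.base, h2.inv, h2.graph⟩⟩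
    have hg := g_c1 hW hf hne hh2
    have h3 := ih hW hg hne (by
      intro x hx x' hx'
      obtain ⟨H, H', h1, h2⟩ := hh x hx x' hx'
      exact ⟨prol H, prol H', half_prol hW hf hx hx' h1 h2, half_prol hW hf hx' hx h2 h1⟩)
    have h4 : ContDiffOn ℝ (((k + 1 : ℕ) : WithTop ℕ∞) + 1) f W := by
      rw [contDiffOn_succ_iff_fderiv_of_isOpen hW]
      exact ⟨hf.differentiableOn one_ne_zero, by simp, h3.snd⟩
    exact_mod_cast h4

/-- The coordinate plane `ℝ^j × {0}`. -/
def coordPlane (d j : ℕ) : Submodule ℝ (Euc d) where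
  carrier := {x : Euc d | ∀ i : Fin d, j ≤ (i : ℕ) → x i = 0}
  add_mem' := fun {a b} ha hb i hi => by simp [ha i hi, hb i hi]
  zero_mem' := fun i _ => by simp
  smul_mem' := fun c x hx i hi => by simp [hx i hi]

/-- Splitting of `ℝ^d` along the coordinate plane. -/
def splitE (d j : ℕ) : (coordPlane d j × (coordPlane d j)ᗮ) ≃L[ℝ] Euc d :=
  (Submodule.prodEquivOfIsCompl (coordPlane d j) (coordPlane d j)ᗮ
    (Submodule.isCompl_orthogonal _)).toContinuousLinearEquiv

theorem splitE_mem {d j : ℕ} (w : coordPlane d j × (coordPlane d j)ᗮ) :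
    splitE d j w ∈ coordPlane d j ↔ w.2 = 0 := by
  have h : splitE d j w = (w.1 : Euc d) + (w.2 : Euc d) := by
    simp [splitE]
  rw [h, Submodule.add_mem_iff_right _ w.1.2]
  constructor
  · intro h2
    have := Submodule.inner_right_of_mem_orthogonal h2 w.2.2
    exact Subtype.ext (inner_self_eq_zero.1 this)
  · intro h2
    simp [h2]

theorem graph_chart {d : ℕ} {N : Set (Euc d)} (h1 : IsCkSubmanifold 1 d N) {p : Euc d}
    (hp : p ∈ N) : ∃ (j : ℕ) (L : (coordPlane d j × (coordPlane d j)ᗮ) ≃L[ℝ] Euc d)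
      (f : coordPlane d j → (coordPlane d j)ᗮ), f 0 = 0 ∧ ContDiffAt ℝ 1 f 0 ∧
      ∀ᶠ w in 𝓝 0, (p + L w ∈ N ↔ f w.1 = w.2) := by
  obtain ⟨U, V, φ, φ', j, ⟨hU, hV, hφ, hφ', hm, hm', hi, hi'⟩, hpU, him⟩ := h1 p hp
  simp only [Nat.cast_one] at hφ hφ'
  have hφp : ContDiffAt ℝ 1 φ p := hφ.contDiffAt (hU.mem_nhds hpU)
  have hφp' : ContDiffAt ℝ 1 φ' (φ p) := hφ'.contDiffAt (hV.mem_nhds (hm hpU))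
  have dφ := (hφp.differentiableAt one_ne_zero).hasFDerivAt
  have dφ' := (hφp'.differentiableAt one_ne_zero).hasFDerivAt
  have c1 : ∀ v, fderiv ℝ φ' (φ p) (fderiv ℝ φ p v) = v := by
    have a1 := dφ'.comp p dφ
    have a2 : HasFDerivAt (φ' ∘ φ) (ContinuousLinearMap.id ℝ (Euc d)) p :=
      (hasFDerivAt_id p).congr_of_eventuallyEq (by
        filter_upwards [hU.mem_nhds hpU] with x hx
        exact hi x hx)
    intro v
    exact congrArg (fun T : Euc d →L[ℝ] Euc d => T v) (a1.unique a2)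
  have c2 : ∀ v, fderiv ℝ φ p (fderiv ℝ φ' (φ p) v) = v := by
    have a1 := HasFDerivAt.comp (g := φ) (φ p) (by rw [hi p hpU]; exact dφ) dφ'
    have a2 : HasFDerivAt (φ ∘ φ') (ContinuousLinearMap.id ℝ (Euc d)) (φ p) :=
      (hasFDerivAt_id (φ p)).congr_of_eventuallyEq (by
        filter_upwards [hV.mem_nhds (hm hpU)] with x hx
        exact hi' x hx)
    intro v
    exact congrArg (fun T : Euc d →L[ℝ] Euc d => T v) (a1.unique a2)
  have hmemN : ∀ q ∈ U, (q ∈ N ↔ φ q ∈ coordPlane d j) := by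
    intro q hq
    constructor
    · intro hqN
      have : φ q ∈ φ '' (N ∩ U) := ⟨q, ⟨hqN, hq⟩, rfl⟩
      rw [him] at this
      exact this.2
    · intro hqS
      have : φ q ∈ φ '' (N ∩ U) := by
        rw [him]
        exact ⟨hm hq, hqS⟩
      obtain ⟨q', hq', he⟩ := this
      have h5 := hi q' hq'.2
      rw [he, hi q hq] at h5
      rw [h5]
      exact hq'.1
  set e := splitE d j with he
  set L : (coordPlane d j × (coordPlane d j)ᗮ) ≃L[ℝ] Euc d :=
    e.trans (ContinuousLinearEquiv.equivOfInverse (fderiv ℝ φ' (φ p)) (fderiv ℝ φ p) c2 c1) with hL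
  have hLa : ∀ w, L w = fderiv ℝ φ' (φ p) (e w) := fun w => rfl
  have hS : ∀ q, φ q ∈ coordPlane d j ↔ (e.symm (φ q)).2 = 0 := by
    intro q
    rw [← splitE_mem, ← he, e.apply_symm_apply]
  set G : coordPlane d j × (coordPlane d j)ᗮ → (coordPlane d j)ᗮ :=
    fun w => (e.symm (φ (p + L w))).2 with hG
  have hp0 : p + L 0 = p := by simp
  have hφ0 : ContDiffAt ℝ 1 φ (p + L 0) := by rw [hp0]; exact hφp
  have haff : ContDiffAt ℝ 1 (fun w => p + L w) 0 := by fun_prop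
  have hGc : ContDiffAt ℝ 1 G 0 :=
    (e.symm.contDiff.contDiffAt.comp (0 : coordPlane d j × (coordPlane d j)ᗮ)
      (hφ0.comp (0 : coordPlane d j × (coordPlane d j)ᗮ) haff)).snd
  have hG0 : G 0 = 0 := by
    simp only [hG, hp0]
    exact (hS p).1 ((hmemN p hpU).1 hp)
  have hGd : HasFDerivAt G (ContinuousLinearMap.snd ℝ _ _) 0 := by
    have a1 : HasFDerivAt (fun w => p + L w) (L : _ →L[ℝ] Euc d) 0 :=
      L.hasFDerivAt.const_add p
    have a2 := HasFDerivAt.comp (g := φ) (0 : coordPlane d j × (coordPlane d j)ᗮ)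
      (by rw [hp0]; exact dφ) a1
    have a3 := (e.symm.hasFDerivAt.comp (0 : coordPlane d j × (coordPlane d j)ᗮ) a2).snd
    refine HasFDerivAt.congr_fderiv a3 (ContinuousLinearMap.ext fun v => ?_)
    change (e.symm (fderiv ℝ φ p (L v))).2 = v.2
    rw [hLa, c2, e.symm_apply_apply]
  have hinv : (fderiv ℝ G 0 ∘L .inr ℝ (coordPlane d j) (coordPlane d j)ᗮ).IsInvertible := by
    refine ⟨ContinuousLinearEquiv.refl ℝ _, ?_⟩
    rw [hGd.fderiv]
    ext v
    rfl
  refine ⟨j, L, hGc.implicitFunction one_ne_zero hinv,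
    hGc.implicitFunction_apply_self one_ne_zero hinv,
    hGc.contDiffAt_implicitFunction one_ne_zero hinv, ?_⟩
  have hUe : ∀ᶠ w in 𝓝 (0 : coordPlane d j × (coordPlane d j)ᗮ), p + L w ∈ U :=
    haff.continuousAt.eventually (hU.mem_nhds (by beta_reduce; rw [hp0]; exact hpU))
  filter_upwards [hUe, hGc.eventually_apply_eq_iff_implicitFunction one_ne_zero hinv] with w w1 w2
  rw [hmemN _ w1, hS, ← w2, hG0]

theorem half_of_hom {d j k : ℕ} {N : Set (Euc d)} {p : Euc d}
    (L : (coordPlane d j × (coordPlane d j)ᗮ) ≃L[ℝ] Euc d)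
    {f : coordPlane d j → (coordPlane d j)ᗮ} {O : Set (coordPlane d j × (coordPlane d j)ᗮ)}
    (hO : IsOpen O) (hON : ∀ w ∈ O, (p + L w ∈ N ↔ f w.1 = w.2)) {x x' : coordPlane d j}
    (hf : ContinuousAt f x) (hx : (x, f x) ∈ O) (hx' : (x', f x') ∈ O)
    {U : Set (Euc d)} {H H' : Euc d → Euc d} (hU : IsOpen U) (hH : ContDiffOn ℝ k H U)
    (hinv : ∀ y ∈ U, H' (H y) = y) (hxU : p + L (x, f x) ∈ U)
    (hb : H (p + L (x, f x)) = p + L (x', f x')) (hN : ∀ y ∈ N ∩ U, H y ∈ N) :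
    Half k f (fun w => L.symm (H (p + L w) - p)) (fun w => L.symm (H' (p + L w) - p)) x x' := by
  have haff : ∀ w, ContDiffAt ℝ k (fun w => p + L w) w := fun w => by fun_prop
  have hHc : ContDiffAt ℝ k (fun w => L.symm (H (p + L w) - p)) (x, f x) := by
    have h0 : ContDiffAt ℝ k (fun w => H (p + L w)) (x, f x) :=
      (hH.contDiffAt (hU.mem_nhds hxU)).comp (x, f x) (haff _)
    exact L.symm.contDiff.contDiffAt.comp (x, f x) (h0.sub contDiffAt_const)
  have hUe : ∀ᶠ w in 𝓝 (x, f x), p + L w ∈ U :=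
    (haff _).continuousAt.eventually (hU.mem_nhds hxU)
  have hb' : L.symm (H (p + L (x, f x)) - p) = (x', f x') := by
    rw [hb]; simp
  refine ⟨hHc, hb', ?_, ?_⟩
  · filter_upwards [hUe] with w hw
    simp [hinv _ hw]
  · have hgc : ContinuousAt (fun z => (z, f z)) x := continuousAt_id.prodMk hf
    have hOe : ∀ᶠ w in 𝓝 (x, f x), L.symm (H (p + L w) - p) ∈ O :=
      hHc.continuousAt.eventually (hO.mem_nhds (by beta_reduce; rw [hb']; exact hx'))
    filter_upwards [hgc.eventually hUe, hgc.eventually hOe, hgc.eventually (hO.mem_nhds hx)]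
      with z z1 z2 z3
    refine ((hON _ z2).1 ?_).symm
    have := hN _ ⟨(hON _ z3).2 rfl, z1⟩
    simpa using this

theorem final_aux {d k : ℕ} (hk : 2 ≤ k)
    {N : Set (Euc d)} (h1 : IsCkSubmanifold 1 d N) (hhom : CkHomogeneous k N) :
    IsCkSubmanifold k d N := by
  intro p hp
  obtain ⟨j, L, f, hf0, hfc, hev⟩ := graph_chart h1 hp
  obtain ⟨O, hON, hO, h0O⟩ := _root_.mem_nhds_iff.1 hev
  have hON : ∀ w ∈ O, (p + L w ∈ N ↔ f w.1 = w.2) := fun w hw => hON hw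
  have hgc : ContinuousAt (fun z => (z, f z)) 0 := continuousAt_id.prodMk hfc.continuousAt
  obtain ⟨W, hWs, hW, h0W⟩ := _root_.mem_nhds_iff.1
    ((hfc.eventually (by simp)).and
      (hgc.eventually (hO.mem_nhds (by beta_reduce; rw [hf0]; exact h0O))))
  have hfW : ContDiffOn ℝ 1 f W := fun x hx => (hWs hx).1.contDiffWithinAt
  have hWO : ∀ x ∈ W, (x, f x) ∈ O := fun x hx => (hWs hx).2
  have hk1 : k - 1 + 1 = k := by omega
  have hfk : ContDiffOn ℝ k f W := by
    have := core_smooth (k - 1) hW hfW ⟨0, h0W⟩ (by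
      rw [hk1]
      intro x hx x' hx'
      have hxN := (hON _ (hWO x hx)).2 rfl
      have hxN' := (hON _ (hWO x' hx')).2 rfl
      obtain ⟨U, V, H, H', ⟨hU, hV, hH, hH', hm, hm', hi, hi'⟩, hxU, hxV, hb, him⟩ :=
        hhom _ hxN _ hxN'
      refine ⟨_, _, half_of_hom L hO hON (hfW.continuousOn.continuousAt (hW.mem_nhds hx))
        (hWO x hx) (hWO x' hx') hU hH hi hxU hb ?_,
        half_of_hom L hO hON (hfW.continuousOn.continuousAt (hW.mem_nhds hx'))
        (hWO x' hx') (hWO x hx) hV hH' hi' hxV ?_ ?_⟩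
      · intro y hy
        have : H y ∈ H '' (N ∩ U) := ⟨y, hy, rfl⟩
        rw [him] at this
        exact this.1
      · rw [← hb, hi _ hxU]
      · intro y hy
        rw [← him] at hy
        obtain ⟨z, hz, rfl⟩ := hy
        rw [hi z hz.2]
        exact hz.1)
    rwa [hk1] at this
  set e := splitE d j with he
  refine ⟨{q | (L.symm (q - p)).1 ∈ W ∧ L.symm (q - p) ∈ O},
    {v | (e.symm v).1 ∈ W ∧ ((e.symm v).1, (e.symm v).2 + f (e.symm v).1) ∈ O},
    fun q => e ((L.symm (q - p)).1, (L.symm (q - p)).2 - f (L.symm (q - p)).1),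
    fun v => p + L ((e.symm v).1, (e.symm v).2 + f (e.symm v).1), j,
    ⟨?_, ?_, ?_, ?_, ?_, ?_, ?_, ?_⟩, ?_, ?_⟩
  · exact (hW.preimage (by fun_prop)).inter (hO.preimage (by fun_prop))
  · have hc : ContinuousOn (fun v => ((e.symm v).1, (e.symm v).2 + f (e.symm v).1))
        {v | (e.symm v).1 ∈ W} := by
      have h3 : ContinuousOn (fun v => f (e.symm v).1) {v | (e.symm v).1 ∈ W} :=
        hfW.continuousOn.comp (f := fun v => (e.symm v).1) (by fun_prop) (fun v hv => hv)
      exact ContinuousOn.prodMk (by fun_prop) (ContinuousOn.add (by fun_prop) h3)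
    exact hc.isOpen_inter_preimage (hW.preimage (by fun_prop)) hO
  · have hw : ContDiff ℝ k (fun q => L.symm (q - p)) := by fun_prop
    refine e.contDiff.comp_contDiffOn (hw.fst.contDiffOn.prodMk (hw.snd.contDiffOn.sub ?_))
    exact hfk.comp (f := fun q => (L.symm (q - p)).1) hw.fst.contDiffOn (fun q hq => hq.1)
  · have hw : ContDiff ℝ k (fun q => e.symm q) := by fun_prop
    refine contDiffOn_const.add (L.contDiff.comp_contDiffOn
      (hw.fst.contDiffOn.prodMk (hw.snd.contDiffOn.add ?_)))
    exact hfk.comp (f := fun q => (e.symm q).1) hw.fst.contDiffOn (fun q hq => hq.1)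
  · rintro q ⟨hq1, hq2⟩
    simpa [-map_sub] using ⟨hq1, hq2⟩
  · rintro v ⟨hv1, hv2⟩
    simpa [-map_sub] using ⟨hv1, hv2⟩
  · intro q _
    simp [-map_sub]
  · intro v _
    simp [-map_sub]
  · simpa [-map_sub] using ⟨h0W, h0O⟩
  · ext v
    constructor
    · rintro ⟨q, ⟨hqN, hq1, hq2⟩, rfl⟩
      refine ⟨?_, ?_⟩
      · simpa [-map_sub] using ⟨hq1, hq2⟩
      · have h5 := (hON _ hq2).1 (by simpa [-map_sub] using hqN)
        refine (splitE_mem (d := d) (j := j) _).2 ?_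
        simp [-map_sub, h5]
    · rintro ⟨⟨hv1, hv2⟩, hvS⟩
      have hv0 : (e.symm v).2 = 0 := by
        rw [← splitE_mem, ← he, e.apply_symm_apply]
        exact hvS
      refine ⟨p + L ((e.symm v).1, (e.symm v).2 + f (e.symm v).1), ⟨?_, ?_⟩, ?_⟩
      · exact (hON _ hv2).2 (by simp [hv0])
      · simpa [-map_sub] using ⟨hv1, hv2⟩
      · simp

/-- **Theorem B.** For any integer `k ≥ 2`, any `C^k` homogeneous `C^1` submanifold of `ℝ^d`
is a `C^k` submanifold. -/
theorem ck_homogeneous_c1_submanifold_is_ck (d k : ℕ) (hd : 1 ≤ d) (hk : 2 ≤ k)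
    (N : Set (Euc d)) (h1 : IsCkSubmanifold 1 d N) (hhom : CkHomogeneous k N) :
    IsCkSubmanifold k d N := by
  exact final_aux hk h1 hhom
end
end

section
/- Let ℓ ≥ 0 be an integer, let U ⊆ ℝ^n be an open ball, and let Φ : U → ℝ^m be a C^ℓ function such that: (i) there is C > 0 with |(u, Φ(u)) − (u', Φ(u'))| ≤ C|u − u'| for all u, u' ∈ U; (ii) the jet map u ↦ j_u^ℓ Φ is continuous and bounded on U; and (iii) there exists ρ > 0 such that for every pair z = (u, u') ∈ U × U there are maps H_z^ℓ : B_{J^ℓ(ℝ^n,ℝ^m)}(j_u^ℓ Φ, ρ) → J^ℓ(ℝ^n, ℝ^m) and H_z^0 defined on the corresponding ball in J^0(ℝ^n, ℝ^m) = ℝ^n × ℝ^m, with π_{ℓ,0} ∘ H_z^ℓ = H_z^0 ∘ π_{ℓ,0}, such that, writing H_z^0(v, w) = (h_z(v,w), g_z(v,w)): h_z(u, Φ(u)) = u'; H_z^ℓ(j_v^ℓ Φ) = j^ℓ_{h_z(v, Φ(v))} Φ for every v with j_v^ℓ Φ ∈ B_{J^ℓ(ℝ^n,ℝ^m)}(j_u^ℓ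 Φ, ρ); and the Lipschitz constant of Id − H_z^ℓ on B_{J^ℓ(ℝ^n,ℝ^m)}(j_u^ℓ Φ, ρ) is at most 1/2. Then the map u ↦ j_u^ℓ Φ is locally Lipschitz on U. -/
open Metric Set

noncomputable section

/-- The fiber of the bundle of `ℓ`-jets of maps `ℝ^a → ℝ^b`. -/
abbrev JetFiber (a b ℓ : ℕ) :=
  ∀ i : Fin (ℓ + 1), ContinuousMultilinearMap ℝ (fun _ : Fin (i : ℕ) => Euc a) (Euc b)

/-- The space of `ℓ`-jets of maps `ℝ^a → ℝ^b`, identified with `ℝ^a × P^ℓ(a,b)`. -/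
abbrev Jet (a b ℓ : ℕ) := Euc a × JetFiber a b ℓ

/-- The `ℓ`-jet of `f` at `x`. -/
def jetAt (a b ℓ : ℕ) (f : Euc a → Euc b) (x : Euc a) : Jet a b ℓ :=
  (x, fun i => iteratedFDeriv ℝ i f x)

/-- The projection `π_{ℓ,ℓ'}` from `ℓ`-jets to `ℓ'`-jets, for `ℓ' ≤ ℓ`. -/
def jetProj {a b ℓ ℓ' : ℕ} (h : ℓ' ≤ ℓ) (j : Jet a b ℓ) : Jet a b ℓ' :=
  (j.1, fun i => j.2 ⟨(i : ℕ), by omega⟩)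

/-- The `0`-jet determined by a base point `v` and a value `w`. -/
def jet0mk (a b : ℕ) (v : Euc a) (w : Euc b) : Jet a b 0 :=
  (v, fun i => iteratedFDeriv ℝ i (fun _ => w) v)

theorem jet_aux_iter {X Y : Type*} [NormedAddCommGroup X] [NormedSpace ℝ X]
    [NormedAddCommGroup Y] [NormedSpace ℝ Y] (F : X → Y) (U : Set X) (p : X) (a L M : ℝ)
    (ha : 0 < a) (hL : 0 < L) (hball : Metric.ball p (2 * a) ⊆ U)
    (hM : ∀ u ∈ U, ‖F u‖ ≤ M)
    (u v : X) (hu : u ∈ Metric.ball p a) (hv : v ∈ Metric.ball p a)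
    (hstep : ∀ u' ∈ U, ∃ v', ‖v' - u'‖ ≤ L * ‖v - u‖ ∧
      ‖(F v' - F u') - (F v - F u)‖ ≤ 1 / 2 * ‖F v - F u‖) :
    ‖F v - F u‖ ≤ 6 * M * L / a * ‖v - u‖ := by
  have hsub : Metric.ball p a ⊆ U :=
    (Metric.ball_subset_ball (by linarith)).trans hball
  have key : ∀ k : ℕ, k * (L * ‖v - u‖) ≤ a → ∃ w ∈ U, ‖w - u‖ ≤ k * (L * ‖v - u‖) ∧
      ‖F w - F u - (k : ℝ) • (F v - F u)‖ ≤ k * (1 / 2 * ‖F v - F u‖) := by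
    intro k
    induction k with
    | zero => intro _; exact ⟨u, hsub hu, by simp, by simp⟩
    | succ k ih =>
      intro hk
      push_cast at hk ⊢
      have h0 : 0 ≤ L * ‖v - u‖ := by positivity
      obtain ⟨w, hw, h1, h2⟩ := ih (by linarith)
      obtain ⟨w', h3, h4⟩ := hstep w hw
      have h5 : ‖w' - u‖ ≤ (k + 1) * (L * ‖v - u‖) := by
        calc ‖w' - u‖ = ‖(w' - w) + (w - u)‖ := by congr 1; abel
          _ ≤ ‖w' - w‖ + ‖w - u‖ := norm_add_le _ _
          _ ≤ _ := by linarith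
      refine ⟨w', hball ?_, h5, ?_⟩
      · rw [Metric.mem_ball, dist_eq_norm] at hu ⊢
        calc ‖w' - p‖ = ‖(w' - u) + (u - p)‖ := by congr 1; abel
          _ ≤ ‖w' - u‖ + ‖u - p‖ := norm_add_le _ _
          _ < _ := by linarith
      · calc _ = ‖((F w' - F w) - (F v - F u)) + (F w - F u - (k : ℝ) • (F v - F u))‖ := by
              congr 1; rw [add_smul, one_smul]; abel
          _ ≤ _ := norm_add_le _ _
          _ ≤ _ := by linarith
  rcases (norm_nonneg (v - u)).eq_or_lt with h | h
  · have : v = u := sub_eq_zero.mp (norm_eq_zero.mp h.symm)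
    simp [this]
  have hd : 0 < L * ‖v - u‖ := by positivity
  have hk1 := Nat.floor_le (show 0 ≤ a / (L * ‖v - u‖) by positivity)
  have hk2 := Nat.lt_floor_add_one (a / (L * ‖v - u‖))
  rw [le_div_iff₀ hd] at hk1
  rw [div_lt_iff₀ hd] at hk2
  obtain ⟨w, hw, -, h2⟩ := key _ hk1
  set k : ℝ := (⌊a / (L * ‖v - u‖)⌋₊ : ℝ)
  have hk0 : 0 ≤ k := Nat.cast_nonneg _
  have e1 : ‖k • (F v - F u)‖ = k * ‖F v - F u‖ := by
    rw [norm_smul, Real.norm_of_nonneg hk0]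
  have e2 : ‖k • (F v - F u)‖ ≤ ‖F w - F u‖ + ‖F w - F u - k • (F v - F u)‖ := by
    calc _ = ‖(F w - F u) - (F w - F u - k • (F v - F u))‖ := by congr 1; abel
      _ ≤ _ := norm_sub_le _ _
  have e3 := norm_sub_le (F w) (F u)
  have e4 := norm_sub_le (F v) (F u)
  have m1 := hM w hw
  have m2 := hM u (hsub hu)
  have m3 := hM v (hsub hv)
  have e5 : (k + 1) * ‖F v - F u‖ ≤ 6 * M := by nlinarith
  rw [div_mul_eq_mul_div, le_div_iff₀ ha]
  calc ‖F v - F u‖ * a ≤ ‖F v - F u‖ * ((k + 1) * (L * ‖v - u‖)) := by gcongr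
    _ = ((k + 1) * ‖F v - F u‖) * (L * ‖v - u‖) := by ring
    _ ≤ 6 * M * (L * ‖v - u‖) := by gcongr
    _ = _ := by ring

theorem jet_aux_proj (n m ℓ : ℕ) (Φ : Euc n → Euc m) (v : Euc n) (x : Jet n m ℓ)
    (h1 : x.1 = v) (h2 : x.2 0 = (jetAt n m ℓ Φ v).2 0) :
    jetProj (Nat.zero_le ℓ) x = jet0mk n m v (Φ v) := by
  refine Prod.ext h1 ?_
  funext i
  obtain ⟨i, hi⟩ := i
  obtain rfl : i = 0 := by omega
  refine Eq.trans h2 ?_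
  ext y
  rfl

/-- **Lipschitz propagation of jets.**  Suppose `Φ : U → ℝ^m` is `C^ℓ` on an open ball
`U ⊆ ℝ^n`, its graph map is `C`-Lipschitz, its jet map is continuous and bounded on `U`,
and for every pair `(u, u') ∈ U × U` there is a jet-space homeomorphism `H_z^ℓ` on the
`ρ`-ball around `j_u^ℓ Φ` covering a map `H_z^0` of `0`-jets, preserving the jet
prolongation of `Φ`, moving `u` to `u'`, and with `Lip(Id − H_z^ℓ) ≤ 1/2`.  Then
`u ↦ j_u^ℓ Φ` is locally Lipschitz on `U`. -/
theorem jet_locally_lipschitz (n m ℓ : ℕ) (hn : 1 ≤ n) (hm : 1 ≤ m)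
    (U : Set (Euc n)) (c : Euc n) (r : ℝ) (hr : 0 < r) (hU : U = Metric.ball c r)
    (Φ : Euc n → Euc m) (hΦ : ContDiffOn ℝ ℓ Φ U)
    (C : ℝ) (hC : 0 < C)
    (hlip : ∀ u ∈ U, ∀ u' ∈ U,
      ‖((u, Φ u) : Euc n × Euc m) - (u', Φ u')‖ ≤ C * ‖u - u'‖)
    (hcont : ContinuousOn (jetAt n m ℓ Φ) U)
    (hbdd : ∃ M : ℝ, ∀ u ∈ U, ‖jetAt n m ℓ Φ u‖ ≤ M)
    (ρ : ℝ) (hρ : 0 < ρ)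
    (hhol : ∀ u ∈ U, ∀ u' ∈ U,
      ∃ (Hl : Jet n m ℓ → Jet n m ℓ) (H0 : Jet n m 0 → Jet n m 0),
        -- `π_{ℓ,0} ∘ H_z^ℓ = H_z^0 ∘ π_{ℓ,0}` on the ball
        (∀ x ∈ Metric.ball (jetAt n m ℓ Φ u) ρ,
          jetProj (Nat.zero_le ℓ) (Hl x) = H0 (jetProj (Nat.zero_le ℓ) x)) ∧
        -- `h_z(u, Φ(u)) = u'`
        (H0 (jet0mk n m u (Φ u))).1 = u' ∧
        -- `H_z^ℓ` preserves the jet prolongation of `Φ`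
        (∀ v ∈ U, jetAt n m ℓ Φ v ∈ Metric.ball (jetAt n m ℓ Φ u) ρ →
          Hl (jetAt n m ℓ Φ v) = jetAt n m ℓ Φ ((H0 (jet0mk n m v (Φ v))).1)) ∧
        -- `Lip(Id − H_z^ℓ) ≤ 1/2` on the ball
        LipschitzOnWith (1 / 2 : NNReal) (fun x => x - Hl x)
          (Metric.ball (jetAt n m ℓ Φ u) ρ)) :
    ∀ u ∈ U, ∃ ε > 0, ∃ K : NNReal,
      LipschitzOnWith K (jetAt n m ℓ Φ) (Metric.ball u ε ∩ U) := by
  subst hU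
  obtain ⟨M, hM⟩ := hbdd
  set F := jetAt n m ℓ Φ with hF
  have step : ∀ u ∈ ball c r, ∀ v ∈ ball c r, F v ∈ ball (F u) ρ → ∀ u' ∈ ball c r,
      ∃ v', ‖v' - u'‖ ≤ (1 + C / 2) * ‖v - u‖ ∧
        ‖(F v' - F u') - (F v - F u)‖ ≤ 1 / 2 * ‖F v - F u‖ := by
    intro u hu v hv hvu u' hu'
    obtain ⟨Hl, H0, hp, h1, h2, h3⟩ := hhol u hu u' hu'
    have hself : F u ∈ ball (F u) ρ := mem_ball_self hρ
    refine ⟨(H0 (jet0mk n m v (Φ v))).1, ?_, ?_⟩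
    · let y : Jet n m ℓ := (v, Function.update (F u).2 0 ((F v).2 0))
      have hfst : ‖v - u‖ ≤ C * ‖v - u‖ :=
        (norm_fst_le ((v, Φ v) - (u, Φ u) : Euc n × Euc m)).trans (hlip v hv u hu)
      have hsnd : ‖Φ v - Φ u‖ ≤ C * ‖v - u‖ :=
        (norm_snd_le ((v, Φ v) - (u, Φ u) : Euc n × Euc m)).trans (hlip v hv u hu)
      have h0 : ‖(F v).2 0 - (F u).2 0‖ = ‖Φ v - Φ u‖ := by
        have : (F v).2 0 - (F u).2 0 =
            (continuousMultilinearCurryFin0 ℝ (Euc n) (Euc m)).symm (Φ v - Φ u) := by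
          ext z
          rfl
        rw [this]
        exact LinearIsometryEquiv.norm_map
          (continuousMultilinearCurryFin0 ℝ (Euc n) (Euc m)).symm (Φ v - Φ u)
      have hy : ∀ R : ℝ, 0 ≤ R → ‖v - u‖ ≤ R → ‖(F v).2 0 - (F u).2 0‖ ≤ R →
          ‖y - F u‖ ≤ R := by
        intro R hR ha hb
        refine norm_prod_le_iff.mpr ⟨ha, ?_⟩
        refine (pi_norm_le_iff_of_nonneg hR).mpr fun i => ?_
        change ‖Function.update (F u).2 0 ((F v).2 0) i - (F u).2 i‖ ≤ R
        by_cases hi : i = 0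
        · subst hi
          simpa using hb
        · simpa [Function.update_of_ne hi] using hR
      have hyball : y ∈ ball (F u) ρ := by
        rw [mem_ball, dist_eq_norm] at hvu ⊢
        refine lt_of_le_of_lt (hy ‖F v - F u‖ (norm_nonneg _) (norm_fst_le (F v - F u)) ?_) hvu
        exact (norm_le_pi_norm (F v - F u).2 0).trans (norm_snd_le (F v - F u))
      have hyn : ‖y - F u‖ ≤ C * ‖v - u‖ :=
        hy _ (by positivity) hfst (h0.le.trans hsnd)
      have ey : (Hl y).1 = (H0 (jet0mk n m v (Φ v))).1 := by
        have := hp y hyball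
        have hy0 : y.2 0 = (F v).2 0 := by
          simp [y]
          rfl
        rw [jet_aux_proj n m ℓ Φ v y rfl hy0] at this
        exact congrArg Prod.fst this
      have eu : (Hl (F u)).1 = u' := by
        have := hp (F u) hself
        rw [jet_aux_proj n m ℓ Φ u (F u) rfl rfl] at this
        exact (congrArg Prod.fst this).trans h1
      have hl := h3.norm_sub_le hyball hself
      have hl1 := (norm_fst_le _).trans hl
      have e : ((y - Hl y) - (F u - Hl (F u))).1 =
          (v - (H0 (jet0mk n m v (Φ v))).1) - (u - u') := by
        rw [← ey, ← eu]; rfl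
      rw [e] at hl1
      have hl2 : ‖(v - (H0 (jet0mk n m v (Φ v))).1) - (u - u')‖ ≤ C / 2 * ‖v - u‖ := by
        refine hl1.trans ?_
        push_cast
        linarith
      calc _ = ‖(v - u) - ((v - (H0 (jet0mk n m v (Φ v))).1) - (u - u'))‖ := by
            congr 1; abel
        _ ≤ _ := norm_sub_le _ _
        _ ≤ _ := by linarith
    · have hl := h3.norm_sub_le hvu hself
      have e1 := h2 v hv hvu
      have e2 := h2 u hu hself
      rw [h1] at e2
      simp only [e1, e2] at hl
      rw [← norm_neg]
      refine le_trans (le_of_eq ?_) (hl.trans (le_of_eq ?_))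
      · congr 1; abel
      · push_cast; rfl
  intro p hp
  obtain ⟨b, hb, hbU⟩ := Metric.isOpen_iff.mp isOpen_ball p hp
  obtain ⟨d, hd, hdF⟩ := Metric.continuousAt_iff.mp
    (hcont.continuousAt (isOpen_ball.mem_nhds hp)) (ρ / 2) (by linarith)
  set a := min (b / 2) d with ha_def
  have ha : 0 < a := lt_min (by linarith) hd
  have hab : 2 * a ≤ b := by have := min_le_left (b / 2) d; linarith
  have hM0 : 0 ≤ M := (norm_nonneg _).trans (hM p hp)
  refine ⟨a, ha, ⟨6 * M * (1 + C / 2) / a, by positivity⟩, ?_⟩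
  refine LipschitzOnWith.of_dist_le_mul ?_
  rintro v ⟨hv, hvU⟩ u ⟨hu, huU⟩
  have hvu : F v ∈ ball (F u) ρ := by
    have i1 := hdF (lt_of_lt_of_le (mem_ball.mp hv) (min_le_right _ _))
    have i2 := hdF (lt_of_lt_of_le (mem_ball.mp hu) (min_le_right _ _))
    rw [mem_ball]
    have := dist_triangle_right (F v) (F u) (F p)
    linarith
  rw [dist_eq_norm, dist_eq_norm]
  exact jet_aux_iter F (ball c r) p a (1 + C / 2) M ha (by positivity)
    ((ball_subset_ball hab).trans hbU) hM u v hu hv (step u huU v hvU hvu)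
end
end

section
/- Fix an integer ℓ ≥ 1. For each B ≥ 1 there exist θ₀ = θ₀(B) > 0 and C₀ = C₀(B) > 0 with the following property. Suppose the points {z_{j,k} ∈ ℝ² : 0 ≤ j ≤ ℓ, 0 ≤ k ≤ ℓ}, {x_j ∈ ℝ : 0 ≤ j ≤ ℓ} and {y_k ∈ ℝ : 0 ≤ k ≤ ℓ} satisfy R/η < B and |z_{j,k} − (x_j, y_k)| ≤ θ₀ η for all j, k, where R = max_{j,k} |z_{j,k}| and η = min_{(j,k) ≠ (j',k')} |z_{j,k} − z_{j',k'}|. Then for any values {b_{j,k} ∈ ℝ : 0 ≤ j, k ≤ ℓ} there exists a unique polynomial ℘(x, y) = Σ_{0 ≤ p, q ≤ ℓ} c_{pq} x^p y^q with ℘(z_{j,k}) = b_{j,k} for all 0 ≤ j, k ≤ ℓ; moreover Σ_{p,q} |c_{pq}| R^{p+q} ≤ C₀ max_{j,k} |b_{j,k}|. -/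
open Finset

/-- Evaluation of the polynomial with coefficients `c` at the points `z`. -/
def gridEval {n : ℕ} (z : Fin n → Fin n → ℝ × ℝ) (c : Fin n → Fin n → ℝ) :
    Fin n → Fin n → ℝ :=
  fun j k => ∑ p : Fin n, ∑ q : Fin n, c p q * (z j k).1 ^ (p : ℕ) * (z j k).2 ^ (q : ℕ)

theorem gridEval_inj {n : ℕ} (x y : Fin n → ℝ) (hx : Function.Injective x)
    (hy : Function.Injective y) (c : Fin n → Fin n → ℝ)
    (h : gridEval (fun j k => (x j, y k)) c = 0) : c = 0 := by
  have h1 : ∀ k, (fun p : Fin n => ∑ q : Fin n, c p q * y k ^ (q : ℕ)) = 0 := by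
    intro k
    apply Matrix.eq_zero_of_forall_index_sum_pow_mul_eq_zero hx
    intro j
    have := congrFun (congrFun h j) k
    simp only [gridEval, Pi.zero_apply] at this
    rw [← this]
    refine Finset.sum_congr rfl fun p _ => ?_
    rw [Finset.mul_sum]
    exact Finset.sum_congr rfl fun q _ => by ring
  funext p
  apply Matrix.eq_zero_of_forall_index_sum_pow_mul_eq_zero hy
  intro k
  have := congrFun (h1 k) p
  simp only [Pi.zero_apply] at this
  rw [← this]
  exact Finset.sum_congr rfl fun q _ => by ring

theorem gridEval_continuous {n : ℕ} :
    Continuous (fun a : (Fin n → Fin n → ℝ × ℝ) × (Fin n → Fin n → ℝ) =>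
      gridEval a.1 a.2) := by
  unfold gridEval
  fun_prop

/-- Parameter space for the compactness argument. -/
abbrev GridParam (n : ℕ) : Type :=
  (Fin n → Fin n → ℝ × ℝ) × (Fin n → ℝ) × (Fin n → ℝ) × ℝ × (Fin n → Fin n → ℝ)

theorem gridEval_lower {n : ℕ} (hn : 0 < n) (ε : ℝ) (hε : 0 < ε) :
    ∃ δ > (0 : ℝ), ∃ m > (0 : ℝ), ∀ (z : Fin n → Fin n → ℝ × ℝ) (x y : Fin n → ℝ),
      (∀ j k, ‖z j k‖ ≤ 1) →
      (∀ j k j' k', (j, k) ≠ (j', k') → ε ≤ ‖z j k - z j' k'‖) →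
      (∀ j k, ‖z j k - (x j, y k)‖ ≤ δ) →
      ∀ c : Fin n → Fin n → ℝ, m * ‖c‖ ≤ ‖gridEval z c‖ := by
  let K : Set (GridParam n) := {a | (∀ j k, ‖a.1 j k‖ ≤ 1) ∧
    (∀ j k j' k', (j, k) ≠ (j', k') → ε ≤ ‖a.1 j k - a.1 j' k'‖) ∧
    (∀ j k, ‖a.1 j k - (a.2.1 j, a.2.2.1 k)‖ ≤ a.2.2.2.1) ∧
    0 ≤ a.2.2.2.1 ∧ a.2.2.2.1 ≤ 1 ∧ ‖a.2.2.2.2‖ = 1}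
  let f : GridParam n → ℝ := fun a => a.2.2.2.1 + ‖gridEval a.1 a.2.2.2.2‖
  have hf : Continuous f := by
    have := (gridEval_continuous (n := n)).comp
      (show Continuous (fun a : GridParam n => (a.1, a.2.2.2.2)) by fun_prop)
    exact (show Continuous (fun a : GridParam n => a.2.2.2.1) by fun_prop).add this.norm
  have hclosed : IsClosed K := by
    refine IsClosed.inter (s₁ := {a : GridParam n | ∀ j k, ‖a.1 j k‖ ≤ 1}) ?_ <|
      IsClosed.inter (s₁ := {a : GridParam n | ∀ j k j' k', (j, k) ≠ (j', k') →
        ε ≤ ‖a.1 j k - a.1 j' k'‖}) ?_ <|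
      IsClosed.inter (s₁ := {a : GridParam n | ∀ j k, ‖a.1 j k - (a.2.1 j, a.2.2.1 k)‖ ≤ a.2.2.2.1}) ?_ <|
      IsClosed.inter (s₁ := {a : GridParam n | 0 ≤ a.2.2.2.1}) ?_ <|
      IsClosed.inter (s₁ := {a : GridParam n | a.2.2.2.1 ≤ 1}) (s₂ := {a : GridParam n | ‖a.2.2.2.2‖ = 1}) ?_ ?_
    · simp only [Set.ofPred_forall]
      exact isClosed_iInter fun j => isClosed_iInter fun k =>
        isClosed_le (by fun_prop) (by fun_prop)
    · simp only [Set.ofPred_forall]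
      exact isClosed_iInter fun j => isClosed_iInter fun k =>
        isClosed_iInter fun j' => isClosed_iInter fun k' => isClosed_iInter fun _ =>
        isClosed_le (by fun_prop) (by fun_prop)
    · simp only [Set.ofPred_forall]
      exact isClosed_iInter fun j => isClosed_iInter fun k =>
        isClosed_le (by fun_prop) (by fun_prop)
    · exact isClosed_le (by fun_prop) (by fun_prop)
    · exact isClosed_le (by fun_prop) (by fun_prop)
    · exact isClosed_eq (by fun_prop) (by fun_prop)
  have hK : IsCompact K := by
    refine (isCompact_closedBall (0 : GridParam n) 2).of_isClosed_subset hclosed ?_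
    rintro ⟨z, x, y, t, c⟩ ⟨h1, h2, h3, h4, h5, h6⟩
    simp only at h1 h2 h3 h4 h5 h6
    have hxy : ∀ j k, ‖(x j, y k)‖ ≤ 2 := by
      intro j k
      have e : (x j, y k) = z j k - (z j k - (x j, y k)) := by abel
      rw [e]
      refine (norm_sub_le _ _).trans ?_
      linarith [h1 j k, h3 j k]
    rw [mem_closedBall_zero_iff]
    refine norm_prod_le_iff.2 ⟨?_, norm_prod_le_iff.2 ⟨?_, norm_prod_le_iff.2 ⟨?_,
      norm_prod_le_iff.2 ⟨?_, ?_⟩⟩⟩⟩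
    · refine (pi_norm_le_iff_of_nonneg (by norm_num)).2 fun j =>
        (pi_norm_le_iff_of_nonneg (by norm_num)).2 fun k => ?_
      exact (h1 j k).trans (by norm_num)
    · refine (pi_norm_le_iff_of_nonneg (by norm_num)).2 fun j => ?_
      exact (norm_prod_le_iff.1 (hxy j ⟨0, hn⟩)).1
    · refine (pi_norm_le_iff_of_nonneg (by norm_num)).2 fun j => ?_
      exact (norm_prod_le_iff.1 (hxy ⟨0, hn⟩ j)).2
    · simp only [Real.norm_eq_abs]
      rw [abs_of_nonneg h4]; linarith
    · simp only; linarith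
  have hpos : ∀ a ∈ K, 0 < f a := by
    rintro ⟨z, x, y, t, c⟩ ⟨h1, h2, h3, h4, h5, h6⟩
    simp only at h1 h2 h3 h4 h5 h6
    simp only [f]
    by_contra hcon
    have hg := norm_nonneg (gridEval z c)
    have ht : t = 0 := by linarith
    have hg0 : gridEval z c = 0 := norm_eq_zero.1 (by linarith)
    have hz : z = fun j k => (x j, y k) := by
      funext j k
      have := h3 j k
      rw [ht] at this
      exact sub_eq_zero.1 (norm_le_zero_iff.1 this)
    subst hz
    have hx : Function.Injective x := by
      intro j j' hj
      by_contra hne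
      have := h2 j ⟨0, hn⟩ j' ⟨0, hn⟩ (by simp [hne])
      simp [hj] at this
      linarith
    have hy : Function.Injective y := by
      intro j j' hj
      by_contra hne
      have := h2 ⟨0, hn⟩ j ⟨0, hn⟩ j' (by simp [hne])
      simp [hj] at this
      linarith
    have := gridEval_inj x y hx hy c hg0
    rw [this] at h6
    simp at h6
  obtain ⟨m, hm, hmin⟩ : ∃ m > (0 : ℝ), ∀ a ∈ K, m ≤ f a := by
    rcases K.eq_empty_or_nonempty with h | h
    · exact ⟨1, one_pos, by simp [h]⟩
    · obtain ⟨a, ha, hmin⟩ := hK.exists_isMinOn h hf.continuousOn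
      exact ⟨f a, hpos a ha, fun b hb => hmin hb⟩
  refine ⟨min 1 (m / 2), by positivity, m / 2, by positivity, ?_⟩
  intro z x y h1 h2 h3 c
  rcases eq_or_ne c 0 with rfl | hc
  · simp
  have hc' : 0 < ‖c‖ := norm_pos_iff.2 hc
  have hk := hmin (z, x, y, min 1 (m / 2), ‖c‖⁻¹ • c)
    ⟨h1, h2, h3, by positivity, min_le_left _ _, by
      simp only [norm_smul, norm_inv, norm_norm]; exact inv_mul_cancel₀ hc'.ne'⟩
  have hs : gridEval z (‖c‖⁻¹ • c) = ‖c‖⁻¹ • gridEval z c := by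
    funext j k
    simp only [gridEval, Pi.smul_apply, smul_eq_mul, Finset.mul_sum, mul_assoc]
  simp only [f, hs, norm_smul, norm_inv, norm_norm] at hk
  have hk2 : m / 2 ≤ ‖c‖⁻¹ * ‖gridEval z c‖ := by
    linarith [min_le_right 1 (m / 2)]
  rw [inv_mul_eq_div, le_div_iff₀ hc'] at hk2
  exact hk2

theorem gridEval_exists {n : ℕ} (z : Fin n → Fin n → ℝ × ℝ)
    (h : ∀ c, gridEval z c = 0 → c = 0) (b : Fin n → Fin n → ℝ) : ∃ c, gridEval z c = b := by
  let L : (Fin n → Fin n → ℝ) →ₗ[ℝ] (Fin n → Fin n → ℝ) :=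
    { toFun := gridEval z
      map_add' := by
        intro c d
        funext j k
        simp only [gridEval, Pi.add_apply, add_mul, Finset.sum_add_distrib]
      map_smul' := by
        intro r c
        funext j k
        simp only [gridEval, Pi.smul_apply, smul_eq_mul, Finset.mul_sum, mul_assoc,
          RingHom.id_apply] }
  have hi : Function.Injective L := (injective_iff_map_eq_zero L).2 h
  exact LinearMap.injective_iff_surjective.1 hi b

/-- **Rectangle interpolation lemma (Lemma 8.7).**  If the points `z_{j,k} ∈ ℝ²`
(`0 ≤ j, k ≤ ℓ`) form an approximate rectangular grid — `R/η < B` and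
`|z_{j,k} − (x_j, y_k)| ≤ θ₀ η` — then any values `b_{j,k}` are interpolated by a unique
polynomial `Σ_{p,q} c_{pq} x^p y^q` of bidegree `≤ ℓ`, whose coefficients satisfy
`Σ_{p,q} |c_{pq}| R^{p+q} ≤ C₀ · max_{j,k} |b_{j,k}|`, with `θ₀` and `C₀` depending only
on `B` (and `ℓ`). -/
theorem rectangle_interpolation (ℓ : ℕ) (hℓ : 1 ≤ ℓ) :
    ∀ B : ℝ, 1 ≤ B → ∃ θ₀ > (0 : ℝ), ∃ C₀ > (0 : ℝ),
      ∀ (z : Fin (ℓ + 1) → Fin (ℓ + 1) → ℝ × ℝ)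
        (x y : Fin (ℓ + 1) → ℝ) (R η : ℝ),
        0 < η →
        (∀ j k, ‖z j k‖ ≤ R) →
        (∀ j k j' k', (j, k) ≠ (j', k') → η ≤ ‖z j k - z j' k'‖) →
        R / η < B →
        (∀ j k, ‖z j k - (x j, y k)‖ ≤ θ₀ * η) →
        ∀ b : Fin (ℓ + 1) → Fin (ℓ + 1) → ℝ,
          (∃! c : Fin (ℓ + 1) → Fin (ℓ + 1) → ℝ,
            ∀ j k, ∑ p : Fin (ℓ + 1), ∑ q : Fin (ℓ + 1),
              c p q * (z j k).1 ^ (p : ℕ) * (z j k).2 ^ (q : ℕ) = b j k) ∧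
          (∀ c : Fin (ℓ + 1) → Fin (ℓ + 1) → ℝ,
            (∀ j k, ∑ p : Fin (ℓ + 1), ∑ q : Fin (ℓ + 1),
              c p q * (z j k).1 ^ (p : ℕ) * (z j k).2 ^ (q : ℕ) = b j k) →
            ∀ M : ℝ, (∀ j k, |b j k| ≤ M) →
              ∑ p : Fin (ℓ + 1), ∑ q : Fin (ℓ + 1),
                |c p q| * R ^ ((p : ℕ) + (q : ℕ)) ≤ C₀ * M) := by
  intro B hB
  obtain ⟨δ, hδ, m, hm, H⟩ := gridEval_lower (n := ℓ + 1) (Nat.succ_pos ℓ) B⁻¹ (by positivity)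
  refine ⟨δ / 2, by positivity, ((ℓ : ℝ) + 1) * ((ℓ + 1) * m⁻¹), by positivity, ?_⟩
  intro z x y R η hη hR hsep hRB hxy b
  have hR0 : η ≤ 2 * R := by
    have h01 : ((0 : Fin (ℓ + 1)), (0 : Fin (ℓ + 1))) ≠ (Fin.last ℓ, 0) := by
      intro h
      have := congrArg (fun a => (a.1 : ℕ)) h
      simp at this
      omega
    have := hsep 0 0 (Fin.last ℓ) 0 h01
    have h2 := norm_sub_le (z 0 0) (z (Fin.last ℓ) 0)
    linarith [hR 0 0, hR (Fin.last ℓ) 0]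
  have hRpos : 0 < R := by linarith
  have key : ∀ (c : Fin (ℓ + 1) → Fin (ℓ + 1) → ℝ),
      m * ‖(fun p q => c p q * R ^ ((p : ℕ) + (q : ℕ)) : Fin (ℓ + 1) → Fin (ℓ + 1) → ℝ)‖
        ≤ ‖gridEval z c‖ := by
    intro c
    have h := H (fun j k => R⁻¹ • z j k) (fun j => R⁻¹ * x j) (fun k => R⁻¹ * y k) ?_ ?_ ?_
      (fun p q => c p q * R ^ ((p : ℕ) + (q : ℕ)))
    · have e : gridEval (fun j k => R⁻¹ • z j k)
          (fun p q => c p q * R ^ ((p : ℕ) + (q : ℕ))) = gridEval z c := by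
        funext j k
        simp only [gridEval]
        refine Finset.sum_congr rfl fun p _ => Finset.sum_congr rfl fun q _ => ?_
        simp only [Prod.smul_fst, Prod.smul_snd, smul_eq_mul, mul_pow, pow_add, inv_pow]
        field_simp
      rwa [e] at h
    · intro j k
      simp only [norm_smul, norm_inv, Real.norm_of_nonneg hRpos.le]
      rw [inv_mul_le_iff₀ hRpos]
      simpa using hR j k
    · intro j k j' k' hne
      simp only [← smul_sub, norm_smul, norm_inv, Real.norm_of_nonneg hRpos.le]
      have h1 := hsep j k j' k' hne
      rw [div_lt_iff₀ hη] at hRB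
      rw [inv_mul_eq_div, le_div_iff₀ hRpos, inv_mul_le_iff₀ (by positivity)]
      nlinarith
    · intro j k
      have e : R⁻¹ • z j k - (R⁻¹ * x j, R⁻¹ * y k) = R⁻¹ • (z j k - (x j, y k)) := by
        rw [smul_sub]; rfl
      simp only [e, norm_smul, norm_inv, Real.norm_of_nonneg hRpos.le]
      rw [inv_mul_le_iff₀ hRpos]
      have := hxy j k
      nlinarith
  have hinj : ∀ c, gridEval z c = 0 → c = 0 := by
    intro c hc
    have h := key c
    rw [hc, norm_zero] at h
    have h0 : (fun p q => c p q * R ^ ((p : ℕ) + (q : ℕ)) :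
        Fin (ℓ + 1) → Fin (ℓ + 1) → ℝ) = 0 := by
      apply norm_le_zero_iff.1
      by_contra hcon
      push Not at hcon
      nlinarith [mul_pos hm hcon]
    funext p q
    have := congrFun (congrFun h0 p) q
    simp only [Pi.zero_apply, mul_eq_zero] at this
    exact this.resolve_right (by positivity)
  refine ⟨?_, ?_⟩
  · obtain ⟨c, hc⟩ := gridEval_exists z hinj b
    refine ⟨c, fun j k => congrFun (congrFun hc j) k, ?_⟩
    intro d hd
    have hd' : gridEval z d = b := by funext j k; exact hd j k
    apply sub_eq_zero.1
    apply hinj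
    have : gridEval z (d - c) = gridEval z d - gridEval z c := by
      funext j k
      simp only [gridEval, Pi.sub_apply, sub_mul, Finset.sum_sub_distrib]
    rw [this, hd', hc, sub_self]
  · intro c hc M hM
    have hc' : gridEval z c = b := by funext j k; exact hc j k
    have hM0 : 0 ≤ M := (abs_nonneg _).trans (hM 0 0)
    have hb : ‖b‖ ≤ M := (pi_norm_le_iff_of_nonneg hM0).2 fun j =>
      (pi_norm_le_iff_of_nonneg hM0).2 fun k => hM j k
    have h := key c
    rw [hc'] at h
    have hterm : ∀ p q : Fin (ℓ + 1), |c p q| * R ^ ((p : ℕ) + (q : ℕ)) ≤ m⁻¹ * M := by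
      intro p q
      have h1 := norm_le_pi_norm (fun p q => c p q * R ^ ((p : ℕ) + (q : ℕ)) :
        Fin (ℓ + 1) → Fin (ℓ + 1) → ℝ) p
      have h2 := norm_le_pi_norm (fun q : Fin (ℓ + 1) => c p q * R ^ ((p : ℕ) + (q : ℕ))) q
      have e : |c p q| * R ^ ((p : ℕ) + (q : ℕ)) = ‖c p q * R ^ ((p : ℕ) + (q : ℕ))‖ := by
        rw [Real.norm_eq_abs, abs_mul, abs_of_pos (pow_pos hRpos _)]
      rw [e]
      refine (h2.trans h1).trans ?_
      rw [inv_mul_eq_div, le_div_iff₀ hm, mul_comm]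
      exact h.trans hb
    calc _ ≤ ∑ p : Fin (ℓ + 1), ∑ q : Fin (ℓ + 1), m⁻¹ * M :=
          Finset.sum_le_sum fun p _ => Finset.sum_le_sum fun q _ => hterm p q
      _ = _ := by simp; ring
end
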